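/- Let I and J be sentences with J ⊆_L I, and let K be a sentence with |K| = |I| − |J|. Then the coefficient ⟨𝔖_J·H_K, 𝔖*_I⟩ equals the number of skew colored immaculate tableaux of shape I/J and type K. -/

import Mathlib

open scoped BigOperators

namespace ColoredImm

variable {A : Type*}

/-- A *weak sentence* over the alphabet `A`: a finite list of words (words may be empty). -/
abbrev Sentence (A : Type*) := List (List A)

/-- A genuine *sentence*: all of its words are nonempty. -/
def IsSentence (I : Sentence A) : Prop := ∀ w ∈ I, w ≠ []

/-- The size `|I|` of a sentence: its total number of letters. -/
def size (I : Sentence A) : ℕ := (I.map List.length).sum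

/-- The word lengths `wℓ(I)` of a sentence. -/
def wl (I : Sentence A) : List ℕ := I.map List.length

/-- The flattening of a weak sentence: delete all empty words. -/
def flattenWS (I : Sentence A) : Sentence A := I.filter (fun w => !w.isEmpty)

/-- `Refines J I` means `J ⪯ I`: the sentence `I` can be obtained by concatenating
some adjacent words of `J` (so `J` is a refinement of `I`, and `I` a coarsening of `J`). -/
def Refines (J I : Sentence A) : Prop :=
  ∃ P : List (Sentence A), (∀ p ∈ P, p ≠ []) ∧ P.flatten = J ∧ P.map List.flatten = I

/-! ### Fillings and colored immaculate tableaux -/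

/-- An integer filling of a diagram, recorded row by row. -/
abbrev Filling := List (List ℕ)

/-- The entry of a filling at box `b = (row, column)` (0-indexed), with default `0`. -/
def entryAt (f : Filling) (b : ℕ × ℕ) : ℕ := (f.getD b.1 []).getD b.2 0

/-- `IsCIT I f`: `f` is a colored immaculate tableau of shape `I`; that is, `f` has the
same shape as the colored composition diagram of `I`, its entries are positive integers
weakly increasing left to right along each row, and the entries in the first column are
strictly increasing from top to bottom. -/
def IsCIT (I : Sentence A) (f : Filling) : Prop :=
  f.map List.length = I.map List.length ∧
  (∀ row ∈ f, row.Chain' (· ≤ ·)) ∧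
  (f.filterMap List.head?).Chain' (· < ·) ∧
  (∀ x ∈ f.flatten, 1 ≤ x)

/-- The colors (letters of `w`) of the boxes of one row whose entry (in `row`) is `v`,
read from left to right. -/
def rowWith (w : List A) (row : List ℕ) (v : ℕ) : List A :=
  ((w.zip row).filter (fun p => p.2 == v)).map Prod.fst

/-- The word of the type of a tableau at value `v`: the colors of all boxes with entry `v`,
read left to right, from the bottom row up to the top row. -/
def typeWord (I : Sentence A) (f : Filling) (v : ℕ) : List A :=
  (((I.zip f).reverse).map (fun p => rowWith p.1 p.2 v)).flatten

/-- `HasType I f B` : the tableau `f` (of shape `I`) has type the weak sentence `B`,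
i.e. for every positive integer `v`, the colors of the boxes of `f` containing `v`
(read left to right, bottom to top) form the `v`-th word of `B`. -/
def HasType (I : Sentence A) (f : Filling) (B : Sentence A) : Prop :=
  ∀ v, 1 ≤ v → typeWord I f v = B.getD (v - 1) []

/-- `K_{J,B}`: the number of colored immaculate tableaux of shape `J` and type `B`. -/
noncomputable def KJB (J B : Sentence A) : ℕ :=
  Set.ncard {f : Filling | IsCIT J f ∧ HasType J f B}

/-! ### Standardization -/

/-- The list of boxes of a filling. -/
def boxes (f : Filling) : List (ℕ × ℕ) :=
  ((List.range f.length).map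
    (fun r => (List.range (f.getD r []).length).map (fun j => (r, j)))).flatten

/-- `beforeB f b b'`: box `b` comes strictly before box `b'` in the type-reading order of `f`
(smaller entries first; among equal entries, lower rows first, and within a row left to right). -/
def beforeB (f : Filling) (b b' : ℕ × ℕ) : Bool :=
  entryAt f b < entryAt f b' ||
    (entryAt f b == entryAt f b' && (b'.1 < b.1 || (b.1 == b'.1 && b.2 < b'.2)))

/-- The standardization of a filling: each box is renumbered (starting from `1`)
according to its position in the type-reading order. -/
def stdFill (f : Filling) : Filling :=
  (List.range f.length).map (fun r =>
    (List.range (f.getD r []).length).map (fun j =>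
      1 + ((boxes f).filter (fun b' => beforeB f b' (r, j))).length))

/-- The number of boxes of a filling. -/
def nBoxes (f : Filling) : ℕ := f.flatten.length

/-- A filling of `n` boxes is standard when its entries are exactly `1, …, n`,
each appearing once. -/
def IsStandardF (f : Filling) : Prop := f.flatten.Perm (List.range' 1 (nBoxes f))

/-! ### Descents and the colored descent composition -/

/-- The (0-indexed) row containing the value `v` in a standard filling. -/
def rowOf (f : Filling) (v : ℕ) : ℕ := f.findIdx (fun row => row.contains v)

/-- The sorted list of descents of a standard filling: those `i` with `1 ≤ i ≤ n-1`
such that `i+1` lies in a strictly lower row than `i`. -/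
def descList (f : Filling) : List ℕ :=
  (List.range' 1 (nBoxes f - 1)).filter (fun i => decide (rowOf f i < rowOf f (i + 1)))

/-- The composition of `n` associated to a set of split positions `d_1 < … < d_k`:
`(d_1, d_2 - d_1, …, n - d_k)`. -/
def compOf (ds : List ℕ) (n : ℕ) : List ℕ :=
  List.zipWith (fun a b => b - a) (0 :: ds) (ds ++ [n])

/-- Split a word into a sentence according to a composition. -/
def splitByComp : List A → List ℕ → List (List A)
  | _, [] => []
  | w, a :: rest => w.take a :: splitByComp (w.drop a) rest

/-- The color of the box containing the value `v` in a standard filling of shape `I`. -/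
def colorOf [Inhabited A] (I : Sentence A) (f : Filling) (v : ℕ) : A :=
  (I.getD (rowOf f v) []).getD ((f.getD (rowOf f v) []).findIdx (fun x => x == v)) default

/-- The maximal word of the colored descent composition of a standard filling of shape `I`:
the colors of its boxes read in the order of their integer entries. -/
def readWord [Inhabited A] (I : Sentence A) (f : Filling) : List A :=
  (List.range (nBoxes f)).map (fun i => colorOf I f (i + 1))

/-- The colored descent composition `co_A(U)` of a standard colored immaculate tableau:
read the colors of the boxes in the order of their entries, starting a new word
immediately after each descent. -/
def coA [Inhabited A] (I : Sentence A) (f : Filling) : Sentence A :=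
  if nBoxes f = 0 then [] else splitByComp (readWord I f) (compOf (descList f) (nBoxes f))

/-- `L_{J,C}`: the number of standard colored immaculate tableaux of shape `J`
with colored descent composition `C`. -/
noncomputable def LJC [Inhabited A] (J C : Sentence A) : ℕ :=
  Set.ncard {f : Filling | IsCIT J f ∧ IsStandardF f ∧ coA J f = C}

/-! ### The colored quasisymmetric functions `QSym_A` -/

/-- A (normal form of a) monomial in the partially commutative variables `x_{a,i}`:
a pair consisting of the list of words `(w_1, …, w_m)` and the list of (strictly
increasing, positive) second indices `(j_1 < … < j_m)`, representing
`x_{w_1,j_1} ⋯ x_{w_m,j_m}`. -/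
abbrev Mono (A : Type*) := List (List A) × List ℕ

/-- A colored quasisymmetric "series": a formal linear combination of monomials,
recorded by its coefficient function.  `QSym_A` itself is the span of the colored
monomial functions `MQ I` inside this space. -/
abbrev QSymA (A : Type*) := Mono A → ℚ

/-- Validity of a monomial normal form: words and indices match up, the indices are
strictly increasing positive integers, and all words are nonempty. -/
def ValidMono (m : Mono A) : Prop :=
  m.1.length = m.2.length ∧ m.2.Chain' (· < ·) ∧ (∀ j ∈ m.2, 1 ≤ j) ∧ ∀ w ∈ m.1, w ≠ []

open Classical in
/-- The colored monomial quasisymmetric function `M_I`: the sum of all monomials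
`x_{w_1,j_1} ⋯ x_{w_m,j_m}` with `j_1 < … < j_m`, where `I = (w_1, …, w_m)`. -/
noncomputable def MQ (I : Sentence A) : QSymA A := fun m =>
  if m.1 = I ∧ ValidMono m then 1 else 0

/-- The largest entry of a filling. -/
def maxEntry (f : Filling) : ℕ := f.flatten.foldr max 0

/-- The monomial `x_T` of a colored immaculate tableau `T = f` of shape `I`:
for `T` of type `B = (u_1, …, u_j)` it is `x_{u_1,1} x_{u_2,2} ⋯ x_{u_j,j}`
(empty words are skipped). -/
def monoOf (I : Sentence A) (f : Filling) : Mono A :=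
  let vs := ((List.range (maxEntry f)).map (· + 1)).filter (fun v => !(typeWord I f v).isEmpty)
  (vs.map (typeWord I f), vs)

/-- The colored dual immaculate function `𝔖*_J = Σ_T x_T`, the sum of the monomials of all
colored immaculate tableaux `T` of shape `J` (its coefficient at a monomial `m` is the
number of such tableaux with `x_T = m`). -/
noncomputable def dualImm (J : Sentence A) : QSymA A := fun m =>
  (Set.ncard {f : Filling | IsCIT J f ∧ monoOf J f = m} : ℚ)

/-- The colored fundamental quasisymmetric function `F_I = Σ_{J ⪯ I} M_J`. -/
noncomputable def FQ (I : Sentence A) : QSymA A :=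
  ∑ᶠ J ∈ {J : Sentence A | Refines J I}, MQ J

/-! ### The colored immaculate descent graph -/

/-- Edges of the colored immaculate descent graph: a directed edge from `I` to `J` (`J ≠ I`)
whenever some standard colored immaculate tableau of shape `I` has colored descent
composition `J`. -/
def IsEdge [Inhabited A] (I J : Sentence A) : Prop := J ≠ I ∧ LJC I J ≠ 0

/-- Directed paths from `I` to `K` in the colored immaculate descent graph, recorded by
their (nonempty) lists of successive vertices; the path `[I]` is the empty path at `I`. -/
def PathsFromTo [Inhabited A] (I K : Sentence A) : Set (List (Sentence A)) :=
  {p | p.head? = some I ∧ p.getLast? = some K ∧ p.Chain' IsEdge}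

/-- The signed weight `(-1)^{ℓ(𝒫)} prod(𝒫)` of a directed path `𝒫`:
`ℓ(𝒫)` is its number of edges and `prod(𝒫)` the product of its edge weights `L_{I,J}`. -/
noncomputable def pathWeight [Inhabited A] (p : List (Sentence A)) : ℚ :=
  ((-1 : ℚ)) ^ (p.length - 1) * ((p.zip p.tail).map (fun e => (LJC e.1 e.2 : ℚ))).prod

/-- `L⁻¹_{I,K} = Σ_𝒫 (-1)^{ℓ(𝒫)} prod(𝒫)`, summed over all directed paths `𝒫`
from `I` to `K` in the colored immaculate descent graph. -/
noncomputable def Linv [Inhabited A] (I K : Sentence A) : ℚ :=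
  ∑ᶠ p ∈ PathsFromTo I K, pathWeight p

/-! ### The colored noncommutative symmetric functions `NSym_A` -/

/-- A formal series over the complete homogeneous basis `{H_I}` of `NSym_A`, recorded by its
coefficient function on (weak) sentences.  `NSym_A` itself consists of the finitely
supported elements supported on genuine sentences; see `InNSym`. -/
abbrev NSymA (A : Type*) := Sentence A → ℚ

/-- Membership in `NSym_A` proper: finitely supported, and supported on genuine sentences. -/
def InNSym (f : NSymA A) : Prop :=
  (Function.support f).Finite ∧ ∀ I, f I ≠ 0 → IsSentence I

open Classical in
/-- The colored complete homogeneous noncommutative symmetric function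
`H_I = H_{w_1} ⋯ H_{w_k}`. -/
noncomputable def Hd (I : Sentence A) : NSymA A := fun J => if J = I then 1 else 0

/-- `H_w` for a single word `w`, with `H_∅ = 1`. -/
noncomputable def Hw (w : List A) : NSymA A := if w.isEmpty then Hd [] else Hd [w]

/-- Multiplication in `NSym_A` (the concatenation product, extended to series):
`H_I · H_J = H_{I ⬝ J}`. -/
def mulN (f g : NSymA A) : NSymA A := fun I =>
  ∑ j ∈ Finset.range (I.length + 1), f (I.take j) * g (I.drop j)

/-- The duality pairing `⟨·,·⟩ : NSym_A × QSym_A → ℚ`, determined by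
`⟨H_I, M_J⟩ = δ_{I,J}`: the `M_I`-coefficient of a quasisymmetric function is its
coefficient on the monomial `x_{w_1,1} x_{w_2,2} ⋯ x_{w_k,k}`. -/
noncomputable def pairNQ (G : NSymA A) (F : QSymA A) : ℚ :=
  ∑ᶠ I ∈ {I : Sentence A | IsSentence I}, G I * F (I, List.range' 1 I.length)

/-- All ways of splitting each word of a list of words into a prefix and a suffix. -/
def splitsOf : List (List A) → List (List (List A) × List (List A))
  | [] => [([], [])]
  | w :: ws =>
      (((splitsOf ws).map (fun p =>
        (List.range (w.length + 1)).map (fun t => (w.take t :: p.1, w.drop t :: p.2))))).flatten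

/-- Restriction of a candidate monomial: keep only the nonempty words together with
their indices. -/
def restrictMono (ws : List (List A)) (js : List ℕ) : Mono A :=
  let ps := (ws.zip js).filter (fun p => !p.1.isEmpty)
  (ps.map Prod.fst, ps.map Prod.snd)

/-- The product of colored quasisymmetric series: the coefficient of a monomial in `F·G`
is the sum, over all ways of writing each of its words as a concatenation of a word of a
monomial of `F` (on the left) and a word of a monomial of `G` (on the right), of the
products of the corresponding coefficients. -/
def mulQ (F G : QSymA A) : QSymA A := fun m =>
  ((splitsOf m.1).map (fun p => F (restrictMono p.1 m.2) * G (restrictMono p.2 m.2))).sum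

/-- The right perp operator `M^⊸` of `M ∈ QSym_A`, the linear operator on `NSym_A`
determined by `⟨M^⊸(H), G⟩ = ⟨H, G·M⟩`; explicitly, for the dual bases `{M_I}` and `{H_I}`,
`M^⊸(H) = Σ_I ⟨H, M_I · M⟩ H_I`. -/
noncomputable def rperp (M : QSymA A) (H : NSymA A) : NSymA A :=
  ∑ᶠ I ∈ {I : Sentence A | IsSentence I}, pairNQ H (mulQ (MQ I) M) • Hd I

/-- The colored noncommutative Bernstein operator
`𝔹_v = Σ_u Σ_{Q : w(Q^r) = u} (-1)^{ℓ(Q)} H_{v·u} · (Σ_{S ⪰ Q} M_S^⊸)`,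
where `Q` runs over all sentences, `u = w(Q^r)` is the concatenation of the words of `Q`
in reverse order, and `S` runs over all coarsenings of `Q`. -/
noncomputable def Bern (v : List A) (f : NSymA A) : NSymA A :=
  ∑ᶠ Q ∈ {Q : Sentence A | IsSentence Q},
    ((-1 : ℚ)) ^ Q.length •
      mulN (Hw (v ++ Q.reverse.flatten))
        (∑ᶠ S ∈ {S : Sentence A | Refines Q S}, rperp (MQ S) f)

/-- The colored immaculate function `𝔖_J = 𝔹_{v_1} 𝔹_{v_2} ⋯ 𝔹_{v_h}(1)`. -/
noncomputable def ImmS (J : Sentence A) : NSymA A := J.foldr Bern (Hd [])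

/-- The colored ribbon function `R_I = Σ_{J ⪰ I} (-1)^{ℓ(J) - ℓ(I)} H_J`. -/
noncomputable def Rib (I : Sentence A) : NSymA A :=
  ∑ᶠ J ∈ {J : Sentence A | Refines I J}, ((-1 : ℚ)) ^ (I.length - J.length) • Hd J

/-- The Pieri relation `J ⊂_w K` for a sentence `J = (v_1, …, v_h)` and a word `w`:
`K = (u_1, …, u_g)` with `h ≤ g ≤ h+1` (setting `v_{h+1} = ∅`) and `u_j = v_j · q_j`
for words `q_j` (possibly empty) whose reversed concatenation `q_g ⋯ q_1` equals `w`. -/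
def PieriRel (J : Sentence A) (w : List A) (K : Sentence A) : Prop :=
  J.length ≤ K.length ∧ K.length ≤ J.length + 1 ∧
  ∃ q : List (List A), q.length = K.length ∧ q.reverse.flatten = w ∧
    ∀ j < K.length, K.getD j [] = J.getD j [] ++ q.getD j []

/-- Right containment of a weak sentence `K` in `J`: same length, and each word of `K` is a
suffix of the corresponding word of `J`. -/
def RightContained (K J : Sentence A) : Prop :=
  K.length = J.length ∧ ∀ i < J.length, (K.getD i []).IsSuffix (J.getD i [])

/-- The weak sentence `J/_R K`: remove each word of `K` from the right end of the
corresponding word of `J`. -/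
def rightQuot (J K : Sentence A) : Sentence A :=
  List.zipWith (fun v u => v.take (v.length - u.length)) J K

/-- Left containment `J ⊆_L I`: `ℓ(J) ≤ ℓ(I)` and each word of `J` is a prefix of the
corresponding word of `I`. -/
def LeftContained (J I : Sentence A) : Prop :=
  J.length ≤ I.length ∧ ∀ i < J.length, (J.getD i []).IsPrefix (I.getD i [])

/-- A skew colored immaculate tableau of shape `I/J`: a filling of the active boxes
(the `i`-th row keeps the last `|w_i| - |v_i|` boxes) with positive integers, rows weakly
increasing left to right, and the entries in the (active part of the) first column of `I`
strictly increasing top to bottom. -/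
def IsSkewCIT (I J : Sentence A) (f : Filling) : Prop :=
  f.map List.length =
    (List.range I.length).map (fun i => (I.getD i []).length - (J.getD i []).length) ∧
  (∀ row ∈ f, row.Chain' (· ≤ ·)) ∧
  ((List.range I.length).filterMap
    (fun i => if (J.getD i []).length = 0 then (f.getD i []).head? else none)).Chain' (· < ·) ∧
  (∀ x ∈ f.flatten, 1 ≤ x)

/-- The word of the type of a skew tableau at value `v`: the colors of the active boxes with
entry `v`, read left to right, bottom to top. -/
def skewTypeWord (I J : Sentence A) (f : Filling) (v : ℕ) : List A :=
  (((List.range I.length).reverse).map (fun i =>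
    rowWith ((I.getD i []).drop (J.getD i []).length) (f.getD i []) v)).flatten

/-- `SkewHasType I J f K` : the skew tableau `f` of shape `I/J` has type `K`. -/
def SkewHasType (I J : Sentence A) (f : Filling) (K : Sentence A) : Prop :=
  ∀ v, 1 ≤ v → skewTypeWord I J f v = K.getD (v - 1) []

/-! ### The complement involution `ψ` and the row-strict functions -/

/-- The complement `I^c` of a sentence: the unique sentence with the same maximal word
that splits exactly where `I` does not. -/
def complSent (I : Sentence A) : Sentence A :=
  let w := I.flatten
  let n := w.length
  if n = 0 then []
  else
    let splits := (((wl I).scanl (· + ·) 0).drop 1).dropLast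
    let csplits := (List.range' 1 (n - 1)).filter (fun i => !(splits.contains i))
    splitByComp w (compOf csplits n)

/-- The `M_I`-coefficient of a colored quasisymmetric function. -/
noncomputable def coeffM (G : QSymA A) (I : Sentence A) : ℚ := G (I, List.range' 1 I.length)

/-- The image of `M_I` under `ψ`, via `M_I = Σ_{J ⪯ I} (-1)^{ℓ(J)-ℓ(I)} F_J` and
`ψ(F_J) = F_{J^c}`. -/
noncomputable def psiM (I : Sentence A) : QSymA A :=
  ∑ᶠ J ∈ {J : Sentence A | Refines J I}, ((-1 : ℚ)) ^ (J.length - I.length) • FQ (complSent J)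

/-- The linear involution `ψ` of `QSym_A`, determined by `ψ(F_I) = F_{I^c}`. -/
noncomputable def psiQ (G : QSymA A) : QSymA A :=
  ∑ᶠ I ∈ {I : Sentence A | IsSentence I}, coeffM G I • psiM I

/-- A colored row-strict immaculate tableau of shape `I`: entries strictly increase left to
right along each row and weakly increase top to bottom down the first column. -/
def IsCRSIT (I : Sentence A) (f : Filling) : Prop :=
  f.map List.length = I.map List.length ∧
  (∀ row ∈ f, row.Chain' (· < ·)) ∧
  (f.filterMap List.head?).Chain' (· ≤ ·) ∧
  (∀ x ∈ f.flatten, 1 ≤ x)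

/-- The word of the type of a row-strict tableau at value `v`: the colors of the boxes with
entry `v`, read left to right, top to bottom. -/
def rsTypeWord (I : Sentence A) (f : Filling) (v : ℕ) : List A :=
  ((I.zip f).map (fun p => rowWith p.1 p.2 v)).flatten

/-- The monomial `x_T` of a colored row-strict immaculate tableau. -/
def rsMonoOf (I : Sentence A) (f : Filling) : Mono A :=
  let vs := ((List.range (maxEntry f)).map (· + 1)).filter (fun v => !(rsTypeWord I f v).isEmpty)
  (vs.map (rsTypeWord I f), vs)

/-- The colored row-strict dual immaculate function `ℛ𝔖*_J = Σ_T x_T`, summed over all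
colored row-strict immaculate tableaux `T` of shape `J`. -/
noncomputable def rsDualImm (J : Sentence A) : QSymA A := fun m =>
  (Set.ncard {f : Filling | IsCRSIT J f ∧ rsMonoOf J f = m} : ℚ)

/-- `α ⪰ β` in the reverse lexicographic order on compositions: at the first index where
they differ, `α` has the *smaller* entry (padding with zeros). -/
def RevLexGE (α β : List ℕ) : Prop :=
  α = β ∨ ∃ i, (∀ j < i, α.getD j 0 = β.getD j 0) ∧ α.getD i 0 < β.getD i 0

/-! ### Uncolored (ordinary) versions, for `QSym` -/

namespace Uncolored

/-- A composition: a list of positive integers. -/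
def IsComposition (α : List ℕ) : Prop := ∀ a ∈ α, 1 ≤ a

/-- `β ⪯ α`: the composition `α` is obtained by summing adjacent parts of `β`. -/
def RefinesC (β α : List ℕ) : Prop :=
  ∃ P : List (List ℕ), (∀ p ∈ P, p ≠ []) ∧ P.flatten = β ∧ P.map List.sum = α

/-- A monomial `x_{i_1}^{a_1} ⋯ x_{i_m}^{a_m}` recorded by its exponents and its
strictly increasing positive indices. -/
abbrev MonoU := List ℕ × List ℕ

/-- A quasisymmetric "series", recorded by its coefficient function on monomials.
`QSym` is the span of the monomial functions `MU α` inside this space. -/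
abbrev QSymU := MonoU → ℚ

/-- Validity of a monomial: matching lengths, strictly increasing positive indices,
positive exponents. -/
def ValidMonoU (m : MonoU) : Prop :=
  m.1.length = m.2.length ∧ m.2.Chain' (· < ·) ∧ (∀ j ∈ m.2, 1 ≤ j) ∧ ∀ a ∈ m.1, 1 ≤ a

open Classical in
/-- The monomial quasisymmetric function `M_α`. -/
noncomputable def MU (α : List ℕ) : QSymU := fun m =>
  if m.1 = α ∧ ValidMonoU m then 1 else 0

/-- The fundamental quasisymmetric function `F_α = Σ_{β ⪯ α} M_β`. -/
noncomputable def FU (α : List ℕ) : QSymU :=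
  ∑ᶠ β ∈ {β : List ℕ | RefinesC β α}, MU β

/-- An immaculate tableau of shape `α`: positive integer entries, rows weakly increasing
left to right, first column strictly increasing top to bottom. -/
def IsIT (α : List ℕ) (f : Filling) : Prop :=
  f.map List.length = α ∧
  (∀ row ∈ f, row.Chain' (· ≤ ·)) ∧
  (f.filterMap List.head?).Chain' (· < ·) ∧
  (∀ x ∈ f.flatten, 1 ≤ x)

/-- The number of boxes of `f` with entry `v`. -/
def countOf (f : Filling) (v : ℕ) : ℕ := (f.flatten.filter (fun x => x == v)).length

/-- The monomial `x^T` of an immaculate tableau `T` of type `β`: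
`x_1^{β_1} ⋯ x_h^{β_h}` (zero exponents skipped). -/
def monoOfU (f : Filling) : MonoU :=
  let vs := ((List.range (maxEntry f)).map (· + 1)).filter (fun v => decide (countOf f v ≠ 0))
  (vs.map (countOf f), vs)

/-- The dual immaculate function `𝔖*_α = Σ_T x^T`, summed over all immaculate tableaux
of shape `α`. -/
noncomputable def dualImmU (α : List ℕ) : QSymU := fun m =>
  (Set.ncard {f : Filling | IsIT α f ∧ monoOfU f = m} : ℚ)

/-- The descent composition `co(U)` of a standard immaculate tableau. -/
def descComp (f : Filling) : List ℕ :=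
  if nBoxes f = 0 then [] else compOf (descList f) (nBoxes f)

/-- `L_{α,β}`: the number of standard immaculate tableaux of shape `α` with descent
composition `β`. -/
noncomputable def LU (α β : List ℕ) : ℕ :=
  Set.ncard {f : Filling | IsIT α f ∧ IsStandardF f ∧ descComp f = β}

/-- Edges of the immaculate descent graph `𝔇^n`. -/
def IsEdgeU (α β : List ℕ) : Prop := β ≠ α ∧ LU α β ≠ 0

/-- Directed paths from `α` to `β` in the immaculate descent graph, recorded by their
lists of successive vertices; `[α]` is the empty path at `α`. -/
def PathsU (α β : List ℕ) : Set (List (List ℕ)) :=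
  {p | p.head? = some α ∧ p.getLast? = some β ∧ p.Chain' IsEdgeU}

/-- The signed weight `(-1)^{ℓ(𝒫)} prod(𝒫)` of a path. -/
noncomputable def pathWeightU (p : List (List ℕ)) : ℚ :=
  ((-1 : ℚ)) ^ (p.length - 1) * ((p.zip p.tail).map (fun e => (LU e.1 e.2 : ℚ))).prod

/-- `L⁻¹_{α,β} = Σ_𝒫 (-1)^{ℓ(𝒫)} prod(𝒫)`, over directed paths from `α` to `β` in `𝔇^n`. -/
noncomputable def LinvU (α β : List ℕ) : ℚ :=
  ∑ᶠ p ∈ PathsU α β, pathWeightU p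

end Uncolored

end ColoredImm

/-!
A tableau is determined by its first row together with the tableau formed by the remaining rows,
so tableau counts satisfy a recursion on rows: if the row has color `w` and its inactive or already
filled boxes spell `u`, one splits every word of the type as `pᵢ ++ sᵢ`, requires
`u ++ s₁ ++ s₂ ++ ⋯ = w`, and counts the remaining tableaux of type `p`. In an ordinary tableau the
first row must contain all the smallest entries, since the first column increases strictly, so `u`
is then the first word of the type. In a skew tableau `u` is the word `v` of `J` in that row.

On the other side, `𝔹_v` sends `H_M` to the signed sum of `H_{v ++ x} H_p` over the splits `(p, s)`
of `M` and the refinements `Q` of `s`, where `x` concatenates the words of `Q` in reverse order.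
Pairing with `𝔖*_I` applies the row recursion to the type `(v ++ x, p, K)`. A nonempty subword
`y` of `M` which that recursion puts into the row could equally have been the first word of the
factorization in `Q` of the suffix following it; this changes the sign but not the color of the
row. So all terms in which a letter of `M` enters the row cancel, what remains is the row recursion
of skew tableaux, and induction on `J` concludes.
-/

namespace ColoredImm

open scoped Classical

variable {A R : Type*}

/-- The ways of cutting a word into a prefix and a suffix. -/
noncomputable def cuts (w : List A) : Finset (List A × List A) :=
  (Finset.range (w.length + 1)).image fun t => (w.take t, w.drop t)

lemma mem_cuts {w : List A} {c : List A × List A} : c ∈ cuts w ↔ c.1 ++ c.2 = w := by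
  simp only [cuts, Finset.mem_image, Finset.mem_range]
  constructor
  · rintro ⟨t, -, rfl⟩
    exact List.take_append_drop t w
  · rintro rfl
    exact ⟨c.1.length, by simp⟩

@[simp] lemma cuts_nil : cuts ([] : List A) = {([], [])} := by
  simp [cuts]

lemma sum_cuts_eq_sum_range [AddCommMonoid R] (w : List A) (F : List A × List A → R) :
    ∑ c ∈ cuts w, F c = ∑ t ∈ Finset.range (w.length + 1), F (w.take t, w.drop t) := by
  refine Finset.sum_image fun s hs t ht hst => ?_
  simp only [Finset.coe_range, Set.mem_Iio] at hs ht
  have hlen := congrArg (fun c : List A × List A => c.1.length) hst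
  simp only [List.length_take] at hlen
  omega

lemma sum_cuts_assoc [AddCommMonoid R] (w : List A) (F : List A → List A → List A → R) :
    ∑ c ∈ cuts w, ∑ d ∈ cuts c.1, F d.1 d.2 c.2 =
      ∑ c ∈ cuts w, ∑ d ∈ cuts c.2, F c.1 d.1 d.2 := by
  rw [Finset.sum_sigma', Finset.sum_sigma']
  refine Finset.sum_bij'
    (fun x _ => ⟨(x.2.1, x.2.2 ++ x.1.2), (x.2.2, x.1.2)⟩)
    (fun x _ => ⟨(x.1.1 ++ x.2.1, x.2.2), (x.1.1, x.2.1)⟩) ?_ ?_ ?_ ?_ ?_ <;>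
  · simp only [Finset.mem_sigma, mem_cuts]
    rintro ⟨⟨a, b⟩, c, d⟩ ⟨h₁, h₂⟩
    dsimp only at h₁ h₂
    subst h₁ h₂
    simp

/-- The pairs `(p, s)` of weak sentences such that the `i`-th word of `K` is `pᵢ ++ sᵢ`: the
index set of the sum in the product `mulQ`. -/
noncomputable def splits : Sentence A → Finset (Sentence A × Sentence A)
  | [] => {([], [])}
  | w :: K => (cuts w ×ˢ splits K).image fun x => (x.1.1 :: x.2.1, x.1.2 :: x.2.2)

lemma sum_splits_cons [AddCommMonoid R] (w : List A) (K : Sentence A)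
    (F : Sentence A × Sentence A → R) :
    ∑ ps ∈ splits (w :: K), F ps =
      ∑ c ∈ cuts w, ∑ ps ∈ splits K, F (c.1 :: ps.1, c.2 :: ps.2) := by
  rw [splits, Finset.sum_image, Finset.sum_product]
  rintro ⟨⟨a, b⟩, p, s⟩ - ⟨⟨a', b'⟩, p', s'⟩ - h
  simp_all

lemma sum_map_splitsOf [AddCommMonoid R] (K : Sentence A) (F : Sentence A × Sentence A → R) :
    ((splitsOf K).map F).sum = ∑ ps ∈ splits K, F ps := by
  induction K generalizing F with
  | nil => simp [splitsOf, splits]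
  | cons w K ih =>
    simp only [sum_splits_cons, sum_cuts_eq_sum_range]
    rw [Finset.sum_comm, ← ih]
    simp only [splitsOf, List.map_flatten, List.map_map, List.sum_flatten, Function.comp_def,
      ← List.toFinset_range, List.sum_toFinset _ List.nodup_range]

lemma mem_splits {K : Sentence A} {ps : Sentence A × Sentence A} :
    ps ∈ splits K ↔ ps.1.length = ps.2.length ∧ List.zipWith (· ++ ·) ps.1 ps.2 = K := by
  obtain ⟨p, s⟩ := ps
  induction K generalizing p s with
  | nil => cases p <;> cases s <;> simp [splits]
  | cons w K ih =>
    simp only [splits, Finset.mem_image, Finset.mem_product, mem_cuts, Prod.exists, ih]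
    cases p <;> cases s <;> simp [and_left_comm]

lemma length_of_mem_splits {K : Sentence A} {ps : Sentence A × Sentence A} (h : ps ∈ splits K) :
    ps.1.length = K.length ∧ ps.2.length = K.length := by
  grind [mem_splits]

lemma splits_injOn_fst (K : Sentence A) :
    Set.InjOn Prod.fst (splits K : Set (Sentence A × Sentence A)) := by
  rintro ⟨p, s⟩ h ⟨p', s'⟩ h' (rfl : p = p')
  obtain ⟨hlen, hK⟩ := mem_splits.1 h
  obtain ⟨hlen', hK'⟩ := mem_splits.1 h'
  simp only [Prod.mk.injEq, true_and]
  refine List.ext_getElem (hlen.symm.trans hlen') fun i hi _ => ?_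
  have hword := List.getElem_of_eq (hK.trans hK'.symm) (i := i) (by grind)
  simpa using hword

lemma append_eq_getD_iff (K : Sentence A) (T S : ℕ → List A) :
    (∀ i, T i ++ S i = K.getD i []) ↔
      ∃ ps ∈ splits K, (∀ i, T i = ps.1.getD i []) ∧ ∀ i, S i = ps.2.getD i [] := by
  constructor
  · intro h
    have hout : ∀ i, K.length ≤ i → T i = [] ∧ S i = [] := fun i hi => by simpa [hi] using h i
    refine ⟨((List.range K.length).map T, (List.range K.length).map S), mem_splits.2 ⟨by simp, ?_⟩,
      fun i => ?_, fun i => ?_⟩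
    · refine List.ext_getElem (by simp) fun i hi hi' => ?_
      simp [h i, hi']
    all_goals
      rcases lt_or_ge i K.length with hi | hi
      · simp [hi]
      · simp [hi, hout i hi]
  · rintro ⟨ps, hps, hT, hS⟩ i
    rw [hT, hS]
    grind [mem_splits]

/-! ### Factorizations and refinements -/

/-- The sentences whose concatenation is the word `w`. -/
noncomputable def factorizations (w : List A) : Finset (Sentence A) :=
  Finset.univ.image fun c : Composition w.length => w.splitWrtComposition c

lemma mem_factorizations {w : List A} {Q : Sentence A} :
    Q ∈ factorizations w ↔ IsSentence Q ∧ Q.flatten = w := by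
  simp only [factorizations, Finset.mem_image, Finset.mem_univ, true_and]
  constructor
  · rintro ⟨c, rfl⟩
    refine ⟨fun u hu => ?_, List.flatten_splitWrtComposition _ _⟩
    exact List.length_pos_iff.1 (List.length_pos_of_mem_splitWrtComposition hu)
  · rintro ⟨hQ, rfl⟩
    refine ⟨⟨Q.map List.length, ?_, by simp [List.length_flatten]⟩,
      List.splitWrtComposition_flatten _ _ rfl⟩
    simpa [List.length_pos_iff, IsSentence] using hQ

lemma factorizations_nil : factorizations ([] : List A) = {[]} := by
  ext Q
  simp only [mem_factorizations, List.flatten_eq_nil_iff, Finset.mem_singleton]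
  constructor
  · rintro ⟨hQ, h⟩
    exact List.eq_nil_iff_forall_not_mem.2 fun u hu => hQ u hu (h u hu)
  · rintro rfl
    simp [IsSentence]

lemma sum_factorizations [AddCommMonoid R] {w : List A} (hw : w ≠ []) (F : Sentence A → R) :
    ∑ Q ∈ factorizations w, F Q =
      ∑ c ∈ cuts w with c.1 ≠ [], ∑ Q ∈ factorizations c.2, F (c.1 :: Q) := by
  rw [Finset.sum_sigma']
  symm
  refine Finset.sum_bij (fun x _ => x.1.1 :: x.2) ?_ ?_ ?_ (fun _ _ => rfl)
  · rintro ⟨⟨a, b⟩, Q⟩ h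
    simp only [Finset.mem_sigma, Finset.mem_filter, mem_cuts, mem_factorizations] at h ⊢
    simp_all [IsSentence]
  · rintro ⟨⟨a, b⟩, Q⟩ h ⟨⟨a', b'⟩, Q'⟩ h' hQ
    simp_all [mem_factorizations]
  · intro Q hQ
    obtain ⟨hQ, rfl⟩ := mem_factorizations.1 hQ
    match Q with
    | [] => simp at hw
    | a :: Q =>
      refine ⟨⟨(a, Q.flatten), Q⟩, ?_, rfl⟩
      simp_all [IsSentence, mem_cuts, mem_factorizations]

lemma sum_cuts_filter_fst_eq_nil [AddCommMonoid R] (w : List A) (F : List A × List A → R) :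
    ∑ c ∈ cuts w with c.1 = [], F c = F ([], w) := by
  have hcuts : {c ∈ cuts w | c.1 = []} = {([], w)} := by
    ext ⟨a, b⟩
    simp only [Finset.mem_filter, mem_cuts, Finset.mem_singleton, Prod.mk.injEq]
    grind
  rw [hcuts, Finset.sum_singleton]

lemma sum_cuts_ite_snd_eq_nil [AddCommMonoid R] (w : List A) (F : List A → R) :
    ∑ c ∈ cuts w, (if c.2 = [] then F c.1 else 0) = F w := by
  have hcuts : {c ∈ cuts w | c.2 = []} = {(w, [])} := by
    ext ⟨a, b⟩
    simp only [Finset.mem_filter, mem_cuts, Finset.mem_singleton, Prod.mk.injEq]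
    grind
  rw [← Finset.sum_filter, hcuts, Finset.sum_singleton]

/- A factorization of the suffix, preceded by a nonempty prefix, is a factorization with one more
word: the terms with empty and with nonempty prefix cancel. -/
lemma sum_cuts_sum_factorizations [CommRing R] (w : List A) (F : List A → R) :
    ∑ c ∈ cuts w, ∑ Q ∈ factorizations c.2, (-1) ^ Q.length * F (Q.reverse.flatten ++ c.1) =
      if w = [] then F [] else 0 := by
  split_ifs with hw
  · simp [hw, factorizations_nil]
  · rw [← Finset.sum_filter_add_sum_filter_not _ (fun c => c.1 = []), sum_cuts_filter_fst_eq_nil,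
      sum_factorizations hw, ← Finset.sum_add_distrib]
    refine Finset.sum_eq_zero fun c _ => ?_
    rw [← Finset.sum_add_distrib]
    exact Finset.sum_eq_zero fun Q _ => by simp [pow_succ]

lemma sum_cuts_sum_factorizations_sum_cuts [CommRing R] (w : List A) (G : List A → List A → R) :
    ∑ c ∈ cuts w, ∑ Q ∈ factorizations c.2, (-1) ^ Q.length *
      ∑ d ∈ cuts c.1, G d.1 (Q.reverse.flatten ++ d.2) = G w [] := by
  calc
    _ = ∑ c ∈ cuts w, ∑ d ∈ cuts c.1, ∑ Q ∈ factorizations c.2,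
          (-1) ^ Q.length * G d.1 (Q.reverse.flatten ++ d.2) := by
      simp only [Finset.mul_sum]
      exact Finset.sum_congr rfl fun c _ => Finset.sum_comm
    _ = ∑ c ∈ cuts w, ∑ d ∈ cuts c.2, ∑ Q ∈ factorizations d.2,
          (-1) ^ Q.length * G c.1 (Q.reverse.flatten ++ d.1) :=
      sum_cuts_assoc w fun a b c => ∑ Q ∈ factorizations c,
        (-1) ^ Q.length * G a (Q.reverse.flatten ++ b)
    _ = ∑ c ∈ cuts w, if c.2 = [] then G c.1 [] else 0 :=
      Finset.sum_congr rfl fun c _ => sum_cuts_sum_factorizations c.2 (G c.1)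
    _ = G w [] := sum_cuts_ite_snd_eq_nil w fun a => G a []

/-- The sentences obtained from a weak sentence by factorizing each of its words. -/
noncomputable def refinements : Sentence A → Finset (Sentence A)
  | [] => {[]}
  | w :: S => (factorizations w ×ˢ refinements S).image fun x => x.1 ++ x.2

lemma mem_refinements {S Q : Sentence A} (hS : IsSentence S) :
    Q ∈ refinements S ↔ IsSentence Q ∧ Refines Q S := by
  induction S generalizing Q with
  | nil =>
    simp only [refinements, Finset.mem_singleton, Refines, List.map_eq_nil_iff]
    constructor
    · rintro rfl
      exact ⟨by simp [IsSentence], [], by simp⟩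
    · rintro ⟨-, P, -, rfl, rfl⟩
      rfl
  | cons w S ih =>
    obtain ⟨hw, hS⟩ := List.forall_mem_cons.1 hS
    simp only [refinements, Finset.mem_image, Finset.mem_product, mem_factorizations, ih hS,
      Prod.exists]
    constructor
    · rintro ⟨Q₁, Q₂, ⟨⟨hQ₁, rfl⟩, hQ₂, P, hP, rfl, rfl⟩, rfl⟩
      refine ⟨fun u hu => (List.mem_append.1 hu).elim (hQ₁ u) (hQ₂ u), Q₁ :: P, ?_, rfl, rfl⟩
      refine List.forall_mem_cons.2 ⟨?_, hP⟩
      rintro rfl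
      exact hw rfl
    · rintro ⟨hQ, P, hP, rfl, hPS⟩
      obtain ⟨Q₁, P, rfl, rfl, rfl⟩ := List.map_eq_cons_iff.1 hPS
      obtain ⟨hQ₁, hQ₂⟩ := List.forall_mem_append.1 (List.flatten_cons ▸ hQ)
      exact ⟨Q₁, P.flatten, ⟨⟨hQ₁, rfl⟩, hQ₂, P, (List.forall_mem_cons.1 hP).2, rfl, rfl⟩, rfl⟩

lemma refinements_flattenWS (S : Sentence A) : refinements (flattenWS S) = refinements S := by
  induction S with
  | nil => rfl
  | cons w S ih =>
    cases w with
    | nil =>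
      ext Q
      simp_all [flattenWS, refinements, factorizations_nil]
    | cons a w => simp_all [flattenWS, refinements]

lemma append_inj_of_flatten_eq {P P' Q Q' : Sentence A} (hP : IsSentence P) (hP' : IsSentence P')
    (hflat : P.flatten = P'.flatten) (h : P ++ Q = P' ++ Q') : P = P' ∧ Q = Q' := by
  have eq_nil_of_flatten {S : Sentence A} (hS : IsSentence S) (h : S.flatten = []) : S = [] :=
    Finset.mem_singleton.1 (factorizations_nil ▸ mem_factorizations.2 ⟨hS, h⟩)
  rcases List.append_eq_append_iff.1 h with ⟨S, rfl, rfl⟩ | ⟨S, rfl, rfl⟩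
  · have hS := eq_nil_of_flatten (List.forall_mem_append.1 hP').2 (by simpa using hflat)
    simp [hS]
  · have hS := eq_nil_of_flatten (List.forall_mem_append.1 hP).2 (by simpa using hflat)
    simp [hS]

lemma sum_refinements_cons [AddCommMonoid R] (w : List A) (S : Sentence A) (F : Sentence A → R) :
    ∑ Q ∈ refinements (w :: S), F Q =
      ∑ Q₁ ∈ factorizations w, ∑ Q₂ ∈ refinements S, F (Q₁ ++ Q₂) := by
  rw [refinements, Finset.sum_image, Finset.sum_product]
  rintro ⟨Q₁, Q₂⟩ hQ ⟨Q₁', Q₂'⟩ hQ' h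
  simp only [Finset.coe_product, Set.mem_prod, Finset.mem_coe, mem_factorizations] at hQ hQ' h
  have hprefix := append_inj_of_flatten_eq hQ.1.1 hQ'.1.1 (hQ.1.2.trans hQ'.1.2.symm) h
  simp only [hprefix]

/-! ### Removing a row -/

/-- The sum of `ψ p` over the splits `(p, s)` of `L` such that `u ++ s.flatten = z`: the recursion
removing a row of color `z` from a tableau of type `L`, when the first boxes `u` of that row are
already accounted for. -/
noncomputable def rowSum [AddCommMonoid R] (u z : List A) (ψ : Sentence A → R) (L : Sentence A) :
    R :=
  ∑ ps ∈ splits L, if u ++ ps.2.flatten = z then ψ ps.1 else 0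

lemma rowSum_cons [AddCommMonoid R] (u z w : List A) (ψ : Sentence A → R) (L : Sentence A) :
    rowSum u z ψ (w :: L) = ∑ c ∈ cuts w, rowSum (u ++ c.2) z (fun p => ψ (c.1 :: p)) L := by
  simp [rowSum, sum_splits_cons]

lemma natCast_rowSum [Semiring R] (u z : List A) (ψ : Sentence A → ℕ) (L : Sentence A) :
    ((rowSum u z ψ L : ℕ) : R) = rowSum u z (fun p => (ψ p : R)) L := by
  simp [rowSum]

/- The identity behind the Bernstein operators: the alternating sum over `Q` cancels every
contribution in which some letter of `M` is moved into the row `w`. -/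
lemma sum_splits_sum_refinements_rowSum [CommRing R] (v w : List A) (ψ : Sentence A → R)
    (M K : Sentence A) :
    ∑ ps ∈ splits M, ∑ Q ∈ refinements ps.2,
        (-1) ^ Q.length * rowSum (v ++ Q.reverse.flatten) w ψ (ps.1 ++ K) =
      rowSum v w (fun L => ψ (M ++ L)) K := by
  induction M generalizing ψ with
  | nil => simp [splits, refinements]
  | cons a M ih =>
    let G (b y : List A) : R := ∑ ps ∈ splits M, ∑ Q ∈ refinements ps.2,
      (-1) ^ Q.length * rowSum (v ++ Q.reverse.flatten ++ y) w (fun L => ψ (b :: L)) (ps.1 ++ K)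
    calc
      _ = ∑ c ∈ cuts a, ∑ Q ∈ factorizations c.2, (-1) ^ Q.length *
            ∑ d ∈ cuts c.1, G d.1 (Q.reverse.flatten ++ d.2) := by
        rw [sum_splits_cons]
        refine Finset.sum_congr rfl fun c _ => ?_
        simp only [sum_refinements_cons, List.cons_append, rowSum_cons, G, Finset.mul_sum,
          List.reverse_append, List.flatten_append, List.append_assoc, List.length_append, pow_add,
          mul_assoc]
        rw [Finset.sum_comm]
        refine Finset.sum_congr rfl fun Q _ => ?_
        rw [Finset.sum_comm (s := cuts c.1)]
        exact Finset.sum_congr rfl fun ps _ => Finset.sum_comm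
      _ = G a [] := sum_cuts_sum_factorizations_sum_cuts a G
      _ = rowSum v w (fun L => ψ (a :: M ++ L)) K := by
        simpa [G] using ih fun L => ψ (a :: L)

lemma isSentence_flattenWS (K : Sentence A) : IsSentence (flattenWS K) := by
  simp [IsSentence, flattenWS]

lemma flattenWS_of_isSentence {K : Sentence A} (hK : IsSentence K) : flattenWS K = K :=
  List.filter_eq_self.2 fun w hw => by simpa using hK w hw

lemma flattenWS_append (K L : Sentence A) : flattenWS (K ++ L) = flattenWS K ++ flattenWS L :=
  List.filter_append ..

@[simp] lemma flattenWS_nil_cons (K : Sentence A) : flattenWS ([] :: K) = flattenWS K := rfl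

lemma flattenWS_cons_of_ne_nil {w : List A} (hw : w ≠ []) (K : Sentence A) :
    flattenWS (w :: K) = w :: flattenWS K := by
  simp [flattenWS, hw]

lemma flattenWS_flattenWS (K : Sentence A) : flattenWS (flattenWS K) = flattenWS K :=
  flattenWS_of_isSentence (isSentence_flattenWS K)

lemma rowSum_flattenWS [AddCommMonoid R] (u z : List A) {ψ : Sentence A → R}
    (hψ : ∀ p, ψ (flattenWS p) = ψ p) (L : Sentence A) :
    rowSum u z ψ (flattenWS L) = rowSum u z ψ L := by
  induction L generalizing u ψ with
  | nil => rfl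
  | cons w L ih =>
    by_cases hw : w = []
    · subst hw
      have hψ' : (fun p => ψ ([] :: p)) = ψ := funext fun p => by
        rw [← hψ, flattenWS_nil_cons, hψ]
      simp [rowSum_cons, hψ', ih u hψ]
    · rw [flattenWS_cons_of_ne_nil hw, rowSum_cons, rowSum_cons]
      refine Finset.sum_congr rfl fun c _ => ih _ fun p => ?_
      rw [← hψ, ← hψ (c.1 :: p), ← List.singleton_append, ← List.singleton_append (l := p),
        flattenWS_append, flattenWS_append, flattenWS_flattenWS]

lemma rowSum_flattenWS_append [AddCommMonoid R] (u z : List A) {ψ : Sentence A → R}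
    (hψ : ∀ p, ψ (flattenWS p) = ψ p) (K L : Sentence A) :
    rowSum u z ψ (flattenWS K ++ L) = rowSum u z ψ (K ++ L) := by
  rw [← rowSum_flattenWS u z hψ, ← rowSum_flattenWS u z hψ (K ++ L), flattenWS_append,
    flattenWS_append, flattenWS_flattenWS]

/-- The number of colored immaculate tableaux of shape `I` and type `K`, by removal of the first
row: it contains all the boxes with the smallest entry. -/
noncomputable def tabCount : Sentence A → Sentence A → ℕ
  | [], K => if flattenWS K = [] then 1 else 0
  | w :: I, K =>
    match flattenWS K with
    | [] => 0
    | x :: L => rowSum x w (tabCount I) L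

lemma tabCount_flattenWS (I K : Sentence A) : tabCount I (flattenWS K) = tabCount I K := by
  cases I <;> simp [tabCount, flattenWS_flattenWS]

lemma tabCount_nil_cons (I K : Sentence A) : tabCount I ([] :: K) = tabCount I K := by
  rw [← tabCount_flattenWS, flattenWS_nil_cons, tabCount_flattenWS]

@[simp] lemma tabCount_cons_nil (w : List A) (I : Sentence A) : tabCount (w :: I) [] = 0 := rfl

lemma tabCount_cons_cons {x : List A} (hx : x ≠ []) (w : List A) (I K : Sentence A) :
    tabCount (w :: I) (x :: K) = rowSum x w (tabCount I) K := by
  simp [tabCount, flattenWS_cons_of_ne_nil hx, rowSum_flattenWS x w (tabCount_flattenWS I)]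

/-- The number of skew colored immaculate tableaux of shape `I/J` and type `K`, by removal of the
first row. -/
noncomputable def skewCount : Sentence A → Sentence A → Sentence A → ℕ
  | I, [], K => tabCount I K
  | [], _ :: _, _ => 0
  | w :: I, v :: J, K => rowSum v w (skewCount I J) K

/-! ### Immaculate functions in the basis `H` -/

lemma coe_single_eq_smul_Hd (M : Sentence A) (c : ℚ) : ⇑(Finsupp.single M c) = c • Hd M := by
  ext L
  simp [Hd, Finsupp.single_apply, eq_comm]

/-- The concatenation product `mulN` as a bilinear map. -/
noncomputable def mulNBilin : NSymA A →ₗ[ℚ] NSymA A →ₗ[ℚ] NSymA A :=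
  LinearMap.mk₂ ℚ mulN
    (fun f f' g => by ext; simp [mulN, add_mul, Finset.sum_add_distrib])
    (fun c f g => by ext; simp [mulN, mul_assoc, Finset.mul_sum])
    (fun f g g' => by ext; simp [mulN, mul_add, Finset.sum_add_distrib])
    (fun c f g => by ext; simp [mulN, mul_left_comm, Finset.mul_sum])

lemma mulNBilin_Hd (M K : Sentence A) : mulNBilin (Hd M) (Hd K) = Hd (M ++ K) := by
  ext L
  have hsum : mulN (Hd M) (Hd K) L =
      ∑ c ∈ cuts L, if c = (M, K) then 1 else 0 := by
    rw [sum_cuts_eq_sum_range]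
    exact Finset.sum_congr rfl fun j _ => by simp [Hd, ← ite_and, Prod.ext_iff, and_comm]
  rw [mulNBilin, LinearMap.mk₂_apply, hsum, Finset.sum_ite_eq']
  simp [Hd, mem_cuts, eq_comm]

lemma mulNBilin_coe_eq_mapDomain (g : Sentence A →₀ ℚ) (K : Sentence A) :
    mulNBilin ⇑g (Hd K) = ⇑(g.mapDomain (· ++ K)) := by
  induction g using Finsupp.induction_linear with
  | zero => simp
  | add g g' h h' => simp [Finsupp.mapDomain_add, h, h']
  | single M c => simp [coe_single_eq_smul_Hd, mulNBilin_Hd]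

/-- The finite combinations of the `H_I`, for `I` a genuine sentence. -/
abbrev NSymFin (A : Type*) : Submodule ℚ (Sentence A →₀ ℚ) :=
  Finsupp.supported ℚ ℚ {I | IsSentence I}

lemma pairNQ_eq_linearCombination {g : Sentence A →₀ ℚ} (hg : g ∈ NSymFin A) (G : QSymA A) :
    pairNQ g G = Finsupp.linearCombination ℚ (coeffM G) g := by
  rw [pairNQ, finsum_mem_eq_sum_of_inter_support_eq (t := g.support),
    Finsupp.linearCombination_apply]
  · rfl
  · ext I
    have hI : g I ≠ 0 → IsSentence I := fun h => hg (Finsupp.mem_support_iff.2 h)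
    simp only [Set.mem_inter_iff, Function.mem_support, Finset.mem_coe, Finsupp.mem_support_iff,
      Set.mem_ofPred_eq, and_congr_left_iff]
    exact fun h => ⟨fun _ => left_ne_zero_of_mul h, hI⟩

lemma finsum_mem_sum_ite {ι α N : Type*} [AddCommMonoid N] (P : Set α) (T : Finset ι)
    (B : ι → Finset α) (r : α → ι → Prop)
    [∀ x i, Decidable (r x i)] (hB : ∀ i ∈ T, ∀ x, x ∈ B i ↔ x ∈ P ∧ r x i)
    (f : α → ι → N) :
    ∑ᶠ x ∈ P, ∑ i ∈ T, (if r x i then f x i else 0) = ∑ i ∈ T, ∑ x ∈ B i, f x i := by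
  have hBP : ∀ x ∈ T.biUnion B, x ∈ P := fun x hx => by
    obtain ⟨i, hi, hxi⟩ := Finset.mem_biUnion.1 hx
    exact ((hB i hi x).1 hxi).1
  rw [finsum_mem_eq_sum_of_inter_support_eq (t := T.biUnion B), Finset.sum_comm]
  · refine Finset.sum_congr rfl fun i hi => ?_
    rw [← Finset.sum_filter]
    refine Finset.sum_congr (Finset.ext fun x => ?_) fun _ _ => rfl
    rw [Finset.mem_filter, hB i hi]
    exact ⟨fun h => ⟨hBP x h.1, h.2⟩,
      fun h => ⟨Finset.mem_biUnion.2 ⟨i, hi, (hB i hi x).2 h⟩, h.2⟩⟩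
  · ext x
    simp only [Set.mem_inter_iff, Function.mem_support, Finset.mem_coe, and_congr_left_iff]
    refine fun hx => ⟨fun hxP => ?_, hBP x⟩
    obtain ⟨i, hi, hxi⟩ := Finset.exists_ne_zero_of_sum_ne_zero hx
    exact Finset.mem_biUnion.2 ⟨i, hi, (hB i hi x).2 ⟨hxP, (ite_ne_right_iff.1 hxi).1⟩⟩

lemma restrictMono_fst {p : Sentence A} {js : List ℕ} (h : p.length = js.length) :
    (restrictMono p js).1 = flattenWS p := by
  have hmap : ((p.zip js).filter ((fun w : List A => !w.isEmpty) ∘ Prod.fst)).map Prod.fst =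
      flattenWS p := by
    rw [← List.filter_map, List.map_fst_zip h.le, flattenWS]
  exact hmap

lemma restrictMono_snd_sublist {p : Sentence A} {js : List ℕ} (h : p.length = js.length) :
    (restrictMono p js).2.Sublist js := by
  have hsub : (restrictMono p js).2.Sublist ((p.zip js).map Prod.snd) :=
    List.filter_sublist.map Prod.snd
  rwa [List.map_snd_zip h.ge] at hsub

lemma MQ_restrictMono {n : ℕ} {p : Sentence A} (h : p.length = n) (S : Sentence A) :
    MQ S (restrictMono p (List.range' 1 n)) = if flattenWS p = S then 1 else 0 := by
  have hlen : p.length = (List.range' 1 n).length := by simp [h]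
  have hsub := restrictMono_snd_sublist hlen
  have hfst := restrictMono_fst hlen
  have hlt : (List.range' 1 n).Pairwise (· < ·) := List.pairwise_lt_range'
  have hvalid : ValidMono (restrictMono p (List.range' 1 n)) := by
    refine ⟨by simp [restrictMono], (hlt.sublist hsub).isChain,
      fun j hj => (List.mem_range'_1.1 (hsub.subset hj)).1, ?_⟩
    rw [hfst]
    exact isSentence_flattenWS p
  simp [MQ, hfst, hvalid]

lemma coeffM_mulQ_MQ (I S M : Sentence A) :
    coeffM (mulQ (MQ I) (MQ S)) M =
      ∑ ps ∈ splits M, if flattenWS ps.1 = I ∧ flattenWS ps.2 = S then 1 else 0 := by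
  rw [coeffM, mulQ, sum_map_splitsOf]
  refine Finset.sum_congr rfl fun ps hps => ?_
  obtain ⟨hlen₁, hlen₂⟩ := length_of_mem_splits hps
  simp [MQ_restrictMono hlen₁, MQ_restrictMono hlen₂, ← ite_and, and_comm]

lemma rperp_MQ {g : Sentence A →₀ ℚ} (hg : g ∈ NSymFin A) (S : Sentence A) :
    rperp (MQ S) g = ∑ x ∈ g.support.sigma splits,
      if S = flattenWS x.2.2 then g x.1 • Hd (flattenWS x.2.1) else 0 := by
  have hpair (I : Sentence A) : pairNQ g (mulQ (MQ I) (MQ S)) • Hd I =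
      ∑ x ∈ g.support.sigma splits, if I = flattenWS x.2.1 ∧ S = flattenWS x.2.2 then
        g x.1 • Hd I else 0 := by
    simp only [pairNQ_eq_linearCombination hg, Finsupp.linearCombination_apply, Finsupp.sum,
      coeffM_mulQ_MQ, Finset.sum_sigma, Finset.sum_smul, smul_eq_mul, mul_ite, mul_one, mul_zero,
      ite_smul, zero_smul, eq_comm (b := I), eq_comm (b := S), Finset.mul_sum]
  simp only [rperp, hpair]
  rw [finsum_mem_sum_ite _ (g.support.sigma splits)
    (fun x => if S = flattenWS x.2.2 then {flattenWS x.2.1} else ∅)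
    (fun I x => I = flattenWS x.2.1 ∧ S = flattenWS x.2.2) ?_ (fun I x => g x.1 • Hd I)]
  · exact Finset.sum_congr rfl fun x _ => by split_ifs <;> simp
  · intro x _ I
    split_ifs with h
    · rw [Finset.mem_singleton]
      exact ⟨fun hI => ⟨hI ▸ isSentence_flattenWS _, hI, h⟩, fun hI => hI.2.1⟩
    · simp [h]

lemma finsum_rperp_MQ {g : Sentence A →₀ ℚ} (hg : g ∈ NSymFin A) (Q : Sentence A) :
    ∑ᶠ S ∈ {S : Sentence A | Refines Q S}, rperp (MQ S) g =
      ∑ x ∈ g.support.sigma splits,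
        if Refines Q (flattenWS x.2.2) then g x.1 • Hd (flattenWS x.2.1) else 0 := by
  simp only [rperp_MQ hg]
  rw [finsum_mem_sum_ite _ (g.support.sigma splits)
    (fun x => if Refines Q (flattenWS x.2.2) then {flattenWS x.2.2} else ∅)
    (fun S x => S = flattenWS x.2.2) ?_ (fun _ x => g x.1 • Hd (flattenWS x.2.1))]
  · exact Finset.sum_congr rfl fun x _ => by split_ifs <;> simp
  · intro x _ S
    split_ifs with h
    · rw [Finset.mem_singleton]
      exact ⟨fun hS => ⟨hS ▸ h, hS⟩, And.right⟩
    · exact iff_of_false (Finset.notMem_empty _) fun hS => h (hS.2 ▸ hS.1)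

/-- The Bernstein operator `𝔹_v` on finite combinations of the `H_M`, with the sums over
coarsenings and over sentences carried out. -/
noncomputable def bernComb (v : List A) : (Sentence A →₀ ℚ) →ₗ[ℚ] Sentence A →₀ ℚ :=
  Finsupp.linearCombination ℚ fun M => ∑ ps ∈ splits M, ∑ Q ∈ refinements ps.2,
    Finsupp.single ((v ++ Q.reverse.flatten) :: flattenWS ps.1) ((-1) ^ Q.length)

lemma bernComb_mem_NSymFin {v : List A} (hv : v ≠ []) (g : Sentence A →₀ ℚ) :
    bernComb v g ∈ NSymFin A := by
  rw [bernComb, Finsupp.linearCombination_apply]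
  refine Submodule.sum_mem _ fun M _ => Submodule.smul_mem _ _ <| Submodule.sum_mem _ fun ps _ =>
    Submodule.sum_mem _ fun Q _ => Finsupp.single_mem_supported _ _ ?_
  exact List.forall_mem_cons.2 ⟨by simp [hv], isSentence_flattenWS _⟩

lemma Bern_eq_coe_bernComb {v : List A} (hv : v ≠ []) {g : Sentence A →₀ ℚ} (hg : g ∈ NSymFin A) :
    Bern v g = bernComb v g := by
  have hterm (Q : Sentence A) : (-1 : ℚ) ^ Q.length • mulN (Hw (v ++ Q.reverse.flatten))
      (∑ᶠ S ∈ {S : Sentence A | Refines Q S}, rperp (MQ S) g) =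
      ∑ x ∈ g.support.sigma splits, if Refines Q (flattenWS x.2.2) then
        g x.1 • (-1 : ℚ) ^ Q.length • Hd ((v ++ Q.reverse.flatten) :: flattenWS x.2.1) else 0 := by
    have hw : Hw (v ++ Q.reverse.flatten) = Hd [v ++ Q.reverse.flatten] := by simp [Hw, hv]
    rw [finsum_rperp_MQ hg, hw]
    change _ • mulNBilin _ _ = _
    simp only [map_sum, Finset.smul_sum, apply_ite (mulNBilin _), map_smul, map_zero, smul_ite,
      smul_zero, mulNBilin_Hd, List.singleton_append, smul_comm (g _)]
  simp only [Bern, hterm]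
  rw [finsum_mem_sum_ite _ _ fun x => refinements x.2.2]
  · simp only [bernComb, Finsupp.linearCombination_apply, Finsupp.sum, Finset.sum_sigma,
      Finset.smul_sum, Finsupp.coe_finsetSum, Finsupp.coe_smul, coe_single_eq_smul_Hd]
  · intro x _ Q
    rw [← refinements_flattenWS, mem_refinements (isSentence_flattenWS _), Set.mem_ofPred_eq]

/-- The immaculate function `𝔖_J` as a finite combination of the `H_M`. -/
noncomputable def immComb (J : Sentence A) : Sentence A →₀ ℚ :=
  J.foldr (fun v => bernComb v) (Finsupp.single [] 1)

lemma immComb_mem_NSymFin {J : Sentence A} (hJ : IsSentence J) : immComb J ∈ NSymFin A := by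
  cases J with
  | nil => exact Finsupp.single_mem_supported _ _ (by simp [IsSentence])
  | cons v J => exact bernComb_mem_NSymFin (List.forall_mem_cons.1 hJ).1 _

lemma ImmS_eq_coe_immComb {J : Sentence A} (hJ : IsSentence J) : ImmS J = immComb J := by
  induction J with
  | nil => simp [ImmS, immComb, coe_single_eq_smul_Hd]
  | cons v J ih =>
    obtain ⟨hv, hJ⟩ := List.forall_mem_cons.1 hJ
    exact (congrArg (Bern v) (ih hJ)).trans (Bern_eq_coe_bernComb hv (immComb_mem_NSymFin hJ))

lemma pairNQ_mulN_ImmS {J K : Sentence A} (hJ : IsSentence J) (hK : IsSentence K) (G : QSymA A) :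
    pairNQ (mulN (ImmS J) (Hd K)) G =
      Finsupp.linearCombination ℚ (fun M => coeffM G (M ++ K)) (immComb J) := by
  have hmem : (immComb J).mapDomain (· ++ K) ∈ NSymFin A := by
    intro L hL
    obtain ⟨M, hM, rfl⟩ := Finset.mem_image.1 (Finsupp.mapDomain_support hL)
    exact List.forall_mem_append.2 ⟨immComb_mem_NSymFin hJ hM, hK⟩
  rw [ImmS_eq_coe_immComb hJ]
  change pairNQ (mulNBilin _ _) G = _
  rw [mulNBilin_coe_eq_mapDomain, pairNQ_eq_linearCombination hmem,
    Finsupp.linearCombination_mapDomain]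
  rfl

lemma linearCombination_bernComb (v w : List A) (ψ : Sentence A → ℚ) (g : Sentence A →₀ ℚ)
    (K : Sentence A) (φ : Sentence A → ℚ)
    (hφ : ∀ u p, φ ((v ++ u) :: flattenWS p) = rowSum (v ++ u) w ψ (p ++ K)) :
    Finsupp.linearCombination ℚ φ (bernComb v g) =
      rowSum v w (fun L => Finsupp.linearCombination ℚ (fun M => ψ (M ++ L)) g) K := by
  rw [bernComb, Finsupp.linearCombination_linearCombination]
  simp only [map_sum, Finsupp.linearCombination_single, hφ, smul_eq_mul,
    sum_splits_sum_refinements_rowSum]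
  simp only [Finsupp.linearCombination_apply, rowSum, Finsupp.sum, Finset.smul_sum, smul_ite,
    smul_zero]
  rw [Finset.sum_comm]
  exact Finset.sum_congr rfl fun ps _ => by split_ifs <;> simp

lemma linearCombination_tabCount_immComb {J : Sentence A} (hJ : IsSentence J) (I K : Sentence A) :
    Finsupp.linearCombination ℚ (fun M => (tabCount I (M ++ K) : ℚ)) (immComb J) =
      skewCount I J K := by
  induction J generalizing I K with
  | nil => simp [immComb, skewCount]
  | cons v J ih =>
    obtain ⟨hv, hJ⟩ := List.forall_mem_cons.1 hJ
    cases I with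
    | nil =>
      rw [skewCount, immComb, List.foldr_cons, bernComb,
        Finsupp.linearCombination_linearCombination]
      simp [tabCount, flattenWS_cons_of_ne_nil, hv, Finsupp.linearCombination_apply]
    | cons w I =>
      rw [skewCount, natCast_rowSum]
      simp only [← ih hJ]
      refine linearCombination_bernComb v w (fun L => (tabCount I L : ℚ)) _ K _ fun u p => ?_
      rw [List.cons_append, tabCount_cons_cons (by simp [hv]), natCast_rowSum,
        rowSum_flattenWS_append _ _ fun p => congrArg Nat.cast (tabCount_flattenWS I p)]

/-! ### Counting tableaux -/

lemma rowWith_append {w : List A} {r : List ℕ} (h : r.length = w.length) (w' : List A)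
    (r' : List ℕ) (v : ℕ) :
    rowWith (w ++ w') (r ++ r') v = rowWith w r v ++ rowWith w' r' v := by
  simp [rowWith, List.zip_append h.symm]

lemma rowWith_eq_nil_iff {w : List A} {r : List ℕ} (h : r.length = w.length) (v : ℕ) :
    rowWith w r v = [] ↔ v ∉ r := by
  conv_rhs => rw [← List.map_snd_zip h.le (l₁ := w)]
  simp only [rowWith, List.map_eq_nil_iff, List.filter_eq_nil_iff, beq_iff_eq, Prod.forall,
    List.mem_map, Prod.exists, exists_eq_right, not_exists]
  exact ⟨fun h x hx => h x v hx rfl, fun h x _ hx hv => h x (hv ▸ hx)⟩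

lemma rowWith_replicate (w : List A) (v : ℕ) : rowWith w (List.replicate w.length v) v = w := by
  induction w with
  | nil => rfl
  | cons a w ih => simpa [rowWith, List.replicate_succ] using ih

/-- The weakly increasing row whose boxes with entry `n + 1 + i` are colored by the `i`-th word
of `s`. -/
def rowFill : ℕ → Sentence A → List ℕ
  | _, [] => []
  | n, a :: s => List.replicate a.length (n + 1) ++ rowFill (n + 1) s

lemma length_rowFill (n : ℕ) (s : Sentence A) : (rowFill n s).length = s.flatten.length := by
  induction s generalizing n with
  | nil => rfl
  | cons a s ih => simp [rowFill, ih]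

lemma lt_of_mem_rowFill {n x : ℕ} {s : Sentence A} (hx : x ∈ rowFill n s) : n < x := by
  induction s generalizing n with
  | nil => simp [rowFill] at hx
  | cons a s ih =>
    rcases List.mem_append.1 hx with hx | hx
    · simp [List.eq_of_mem_replicate hx]
    · exact (Nat.lt_succ_self n).trans (ih hx)

lemma pairwise_rowFill (n : ℕ) (s : Sentence A) : (rowFill n s).Pairwise (· ≤ ·) := by
  induction s generalizing n with
  | nil => exact .nil
  | cons a s ih =>
    refine List.pairwise_append.2 ⟨List.pairwise_replicate.2 (.inr le_rfl), ih _, ?_⟩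
    intro x hx y hy
    exact (List.eq_of_mem_replicate hx).trans_le (lt_of_mem_rowFill hy).le

lemma rowWith_rowFill (n : ℕ) (s : Sentence A) (i : ℕ) :
    rowWith s.flatten (rowFill n s) (n + 1 + i) = s.getD i [] := by
  induction s generalizing n i with
  | nil => rfl
  | cons a s ih =>
    rw [List.flatten_cons, rowFill, rowWith_append List.length_replicate]
    cases i with
    | zero =>
      have hnil : rowWith s.flatten (rowFill (n + 1) s) (n + 1) = [] :=
        (rowWith_eq_nil_iff (length_rowFill _ _) _).2 fun h => (lt_of_mem_rowFill h).false
      simp [rowWith_replicate, hnil]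
    | succ i =>
      have hnil : rowWith a (List.replicate a.length (n + 1)) (n + 1 + (i + 1)) = [] :=
        (rowWith_eq_nil_iff List.length_replicate _).2 fun h => by
          have := List.eq_of_mem_replicate h
          omega
      rw [hnil, show n + 1 + (i + 1) = n + 1 + 1 + i by omega, ih]
      simp

lemma exists_eq_replicate_append {n : ℕ} {r : List ℕ} (hr : r.Pairwise (· ≤ ·))
    (hn : ∀ x ∈ r, n < x) :
    ∃ k r', r = List.replicate k (n + 1) ++ r' ∧ ∀ x ∈ r', n + 1 < x := by
  induction r with
  | nil => exact ⟨0, [], rfl, by simp⟩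
  | cons a r ih =>
    obtain ⟨ha, hr_tail⟩ := List.pairwise_cons.1 hr
    obtain ⟨hna, hn_tail⟩ := List.forall_mem_cons.1 hn
    rcases (Nat.succ_le_of_lt hna).eq_or_lt with rfl | hlt
    · obtain ⟨k, r', rfl, hr'⟩ := ih hr_tail hn_tail
      exact ⟨k + 1, r', by simp [List.replicate_succ], hr'⟩
    · exact ⟨0, a :: r, rfl, List.forall_mem_cons.2 ⟨hlt, fun x hx => hlt.trans_le (ha x hx)⟩⟩

lemma flatten_eq_and_eq_rowFill {n : ℕ} {w : List A} {s : Sentence A} {r : List ℕ}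
    (hlen : r.length = w.length) (hr : r.Pairwise (· ≤ ·)) (hn : ∀ x ∈ r, n < x)
    (htype : ∀ i, rowWith w r (n + 1 + i) = s.getD i []) :
    s.flatten = w ∧ r = rowFill n s := by
  induction s generalizing n w r with
  | nil =>
    have hr_nil : r = [] := List.eq_nil_iff_forall_not_mem.2 fun x hx => by
      obtain ⟨i, rfl⟩ := Nat.exists_eq_add_of_le (Nat.succ_le_of_lt (hn x hx))
      exact (rowWith_eq_nil_iff hlen _).1 (htype i) hx
    subst hr_nil
    exact ⟨(List.eq_nil_of_length_eq_zero hlen.symm).symm, rfl⟩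
  | cons a s ih =>
    obtain ⟨k, r', rfl, hr'⟩ := exists_eq_replicate_append hr hn
    obtain ⟨b, w', rfl, rfl⟩ : ∃ b w', w = b ++ w' ∧ k = b.length :=
      ⟨w.take k, w.drop k, (List.take_append_drop k w).symm, by
        rw [List.length_append, List.length_replicate] at hlen
        rw [List.length_take]
        omega⟩
    have hlen' : r'.length = w'.length := by simpa using hlen
    have hsplit (i : ℕ) := (rowWith_append List.length_replicate w' r' (n + 1 + i)).symm.trans
      (htype i)
    have hba : b = a := by
      have hnil := (rowWith_eq_nil_iff hlen' (n + 1)).2 fun h => (hr' _ h).false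
      simpa [rowWith_replicate, hnil] using hsplit 0
    obtain ⟨rfl, rfl⟩ := ih hlen' (List.pairwise_append.1 hr).2.1 hr' fun i => by
      have hnil := (rowWith_eq_nil_iff (w := b) (List.length_replicate (a := n + 1))
        (n + 1 + (i + 1))).2 fun h => by
          have := List.eq_of_mem_replicate h
          omega
      have htail := hsplit (i + 1)
      rw [hnil, List.nil_append, List.getD_cons_succ] at htail
      rw [← htail]
      congr 1
      omega
    exact ⟨by rw [hba, List.flatten_cons], by rw [hba, rowFill]⟩

lemma flatten_eq_and_eq_rowFill_iff {n : ℕ} {w : List A} {s : Sentence A} {r : List ℕ} :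
    (r.length = w.length ∧ r.IsChain (· ≤ ·) ∧ (∀ x ∈ r, n < x) ∧
      ∀ i, rowWith w r (n + 1 + i) = s.getD i []) ↔ s.flatten = w ∧ r = rowFill n s := by
  constructor
  · rintro ⟨hlen, hr, hn, htype⟩
    exact flatten_eq_and_eq_rowFill hlen (List.isChain_iff_pairwise.1 hr) hn htype
  · rintro ⟨rfl, rfl⟩
    exact ⟨length_rowFill n s, (pairwise_rowFill n s).isChain, fun x => lt_of_mem_rowFill,
      rowWith_rowFill n s⟩

lemma typeWord_cons (w : List A) (I : Sentence A) (r : List ℕ) (f : Filling) (v : ℕ) :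
    typeWord (w :: I) (r :: f) v = typeWord I f v ++ rowWith w r v := by
  simp [typeWord]

lemma typeWord_eq_nil_iff {I : Sentence A} {f : Filling}
    (hshape : f.map List.length = I.map List.length) (v : ℕ) :
    typeWord I f v = [] ↔ v ∉ f.flatten := by
  induction I generalizing f with
  | nil => simp_all [typeWord]
  | cons w I ih =>
    obtain ⟨r, f, rfl, hr, hf⟩ := List.map_eq_cons_iff.1 hshape
    rw [typeWord_cons, List.append_eq_nil_iff, ih hf, rowWith_eq_nil_iff hr, List.flatten_cons,
      List.mem_append, not_or, and_comm]

lemma forall_lt_heads_iff {f : Filling} (hf : ∀ r ∈ f, r.IsChain (· ≤ ·)) (a : ℕ) :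
    (∀ b ∈ f.filterMap List.head?, a < b) ↔ ∀ x ∈ f.flatten, a < x := by
  simp only [List.mem_filterMap, List.mem_flatten, forall_exists_index, and_imp]
  constructor
  · intro h x r hr hx
    obtain ⟨b, r, rfl⟩ := List.exists_cons_of_ne_nil (List.ne_nil_of_mem hx)
    have hle := List.pairwise_cons.1 (List.isChain_iff_pairwise.1 (hf _ hr))
    have hb : b ≤ x := (List.mem_cons.1 hx).elim (fun h => h.ge) (hle.1 x)
    exact (h b _ hr rfl).trans_le hb
  · exact fun h b r hr hb => h b r hr (List.mem_of_mem_head? hb)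

lemma isCIT_cons_cons (w : List A) (I : Sentence A) (a : ℕ) (r : List ℕ) (f : Filling) :
    IsCIT (w :: I) ((a :: r) :: f) ↔
      ((a :: r).length = w.length ∧ (a :: r).IsChain (· ≤ ·) ∧ ∀ x ∈ a :: r, 1 ≤ x) ∧
        IsCIT I f ∧ ∀ x ∈ f.flatten, a < x := by
  have hcol (hf : ∀ s ∈ f, s.IsChain (· ≤ ·)) :
      (a :: f.filterMap List.head?).IsChain (· < ·) ↔
        (f.filterMap List.head?).IsChain (· < ·) ∧ ∀ x ∈ f.flatten, a < x := by
    rw [List.isChain_iff_pairwise, List.pairwise_cons, forall_lt_heads_iff hf,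
      List.isChain_iff_pairwise, and_comm]
  change (_ ∧ (∀ s ∈ _, List.IsChain (· ≤ ·) s) ∧ List.IsChain (· < ·) _ ∧ _) ↔
    _ ∧ (_ ∧ (∀ s ∈ _, List.IsChain (· ≤ ·) s) ∧ List.IsChain (· < ·) _ ∧ _) ∧ _
  simp only [List.map_cons, List.cons.injEq, List.forall_mem_cons, List.filterMap_cons,
    List.head?_cons, List.flatten_cons, List.forall_mem_append]
  tauto

/-- The colored immaculate tableaux of shape `I` all of whose entries exceed `n`, the boxes with
entry `n + 1 + i` being colored by the `i`-th word of `K`. -/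
def tableaux (I : Sentence A) (n : ℕ) (K : Sentence A) : Set Filling :=
  {f | IsCIT I f ∧ (∀ x ∈ f.flatten, n < x) ∧ ∀ i, typeWord I f (n + 1 + i) = K.getD i []}

lemma tableaux_cons_nil {w : List A} (hw : w ≠ []) (I : Sentence A) (n : ℕ) :
    tableaux (w :: I) n [] = ∅ := by
  refine Set.eq_empty_of_forall_notMem fun g ⟨hg, hn, htype⟩ => ?_
  obtain ⟨r, f, rfl, hr, -⟩ := List.map_eq_cons_iff.1 hg.1
  obtain ⟨a, ha⟩ := List.exists_mem_of_ne_nil r (by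
    rintro rfl
    exact hw (List.eq_nil_of_length_eq_zero hr.symm))
  have hmem : a ∈ (r :: f).flatten := List.mem_append_left _ ha
  obtain ⟨i, rfl⟩ := Nat.exists_eq_add_of_le (Nat.succ_le_of_lt (hn a hmem))
  exact (typeWord_eq_nil_iff hg.1 _).1 (htype i) hmem

lemma tableaux_nil_cons (I : Sentence A) (n : ℕ) (K : Sentence A) :
    tableaux I n ([] :: K) = tableaux I (n + 1) K := by
  ext f
  refine and_congr_right fun hf => ?_
  have hsucc (i : ℕ) : n + 1 + (i + 1) = n + 1 + 1 + i := by omega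
  constructor
  · rintro ⟨hn, htype⟩
    have hmem : n + 1 ∉ f.flatten := (typeWord_eq_nil_iff hf.1 _).1 (htype 0)
    exact ⟨fun x hx => (Nat.succ_le_of_lt (hn x hx)).lt_of_ne (ne_of_mem_of_not_mem hx hmem).symm,
      fun i => hsucc i ▸ htype (i + 1)⟩
  · rintro ⟨hn, htype⟩
    refine ⟨fun x hx => (Nat.lt_succ_self n).trans (hn x hx), fun i => ?_⟩
    cases i with
    | zero => exact (typeWord_eq_nil_iff hf.1 _).2 fun h => (hn _ h).false
    | succ i => exact hsucc i ▸ htype i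

lemma exists_splits_of_mem_tableaux {w x : List A} (hw : w ≠ []) {I : Sentence A} {n : ℕ}
    {K : Sentence A} {g : Filling} (hg : g ∈ tableaux (w :: I) n (x :: K)) :
    ∃ ps ∈ splits K, x ++ ps.2.flatten = w ∧
      ∃ f ∈ tableaux I (n + 1) ps.1, g = rowFill n (x :: ps.2) :: f := by
  obtain ⟨hg, hn, htype⟩ := hg
  obtain ⟨r, f, rfl, hr, -⟩ := List.map_eq_cons_iff.1 hg.1
  obtain ⟨a, r, rfl⟩ := List.exists_cons_of_ne_nil (l := r) (by
    rintro rfl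
    exact hw (List.eq_nil_of_length_eq_zero hr.symm))
  obtain ⟨⟨hlen, hchain, -⟩, hf, haf⟩ := (isCIT_cons_cons ..).1 hg
  rw [List.flatten_cons, List.forall_mem_append] at hn
  have hnf : ∀ y ∈ f.flatten, n + 1 < y := fun y hy =>
    (Nat.succ_le_of_lt (hn.1 a List.mem_cons_self)).trans_lt (haf y hy)
  have hzero : typeWord I f (n + 1) = [] :=
    (typeWord_eq_nil_iff hf.1 _).2 fun h => (hnf _ h).false
  have hsucc (i : ℕ) : n + 1 + (i + 1) = n + 1 + 1 + i := by omega
  simp only [typeWord_cons] at htype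
  obtain ⟨ps, hps, htail, hrow⟩ := (append_eq_getD_iff K _ _).1 fun i => hsucc i ▸ htype (i + 1)
  obtain ⟨hflat, hfill⟩ := flatten_eq_and_eq_rowFill (s := x :: ps.2) hlen
    (List.isChain_iff_pairwise.1 hchain) hn.1 fun i => by
      cases i with
      | zero => simpa [hzero] using htype 0
      | succ i => exact hsucc i ▸ hrow i
  exact ⟨ps, hps, hflat, f, ⟨hf, hnf, htail⟩, by rw [hfill]⟩

lemma rowFill_cons_mem_tableaux {x : List A} (hx : x ≠ []) {I : Sentence A} {n : ℕ}
    {K : Sentence A} {ps : Sentence A × Sentence A} (hps : ps ∈ splits K) {f : Filling}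
    (hf : f ∈ tableaux I (n + 1) ps.1) :
    rowFill n (x :: ps.2) :: f ∈ tableaux ((x ++ ps.2.flatten) :: I) n (x :: K) := by
  obtain ⟨hf, hnf, htail⟩ := hf
  have hrow := (flatten_eq_and_eq_rowFill_iff (n := n) (s := x :: ps.2)).2 ⟨rfl, rfl⟩
  obtain ⟨r, hr⟩ : ∃ r, rowFill n (x :: ps.2) = (n + 1) :: r := by
    obtain ⟨k, hk⟩ := Nat.exists_eq_succ_of_ne_zero (List.length_pos_iff.2 hx).ne'
    exact ⟨_, by rw [rowFill, hk, List.replicate_succ, List.cons_append]⟩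
  rw [hr] at hrow ⊢
  obtain ⟨hlen, hchain, hn, htype⟩ := hrow
  refine ⟨(isCIT_cons_cons ..).2 ⟨⟨hlen, hchain, fun y hy => Nat.one_le_of_lt (hn y hy)⟩, hf, hnf⟩,
    ?_, fun i => (typeWord_cons ..).trans ?_⟩
  · rw [List.flatten_cons, List.forall_mem_append]
    exact ⟨hn, fun y hy => (Nat.lt_succ_self n).trans (hnf y hy)⟩
  · have hsucc (i : ℕ) : n + 1 + (i + 1) = n + 1 + 1 + i := by omega
    cases i with
    | zero =>
      have hzero : typeWord I f (n + 1) = [] :=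
        (typeWord_eq_nil_iff hf.1 _).2 fun h => (hnf _ h).false
      simpa [hzero] using htype 0
    | succ i =>
      exact (append_eq_getD_iff K (fun i => typeWord I f (n + 1 + (i + 1))) _).2
        ⟨ps, hps, fun i => hsucc i ▸ htail i, fun i => htype (i + 1)⟩ i

lemma sentence_ext_getD {p q : Sentence A} (hlen : p.length = q.length)
    (h : ∀ i, p.getD i [] = q.getD i []) : p = q :=
  List.ext_getElem hlen fun i hp hq => by simpa [hp, hq] using h i

lemma encard_cons_eq_rowSum {S : Sentence A → Set Filling} {c : Sentence A → ℕ}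
    (hS : ∀ p, (S p).encard = c p)
    (hdisj : ∀ p q, p.length = q.length → p ≠ q → Disjoint (S p) (S q))
    (u z : List A) (ρ : Sentence A → List ℕ) (K : Sentence A) :
    {g : Filling | ∃ ps ∈ splits K, u ++ ps.2.flatten = z ∧
      ∃ f ∈ S ps.1, g = ρ ps.2 :: f}.encard = (rowSum u z c K : ℕ) := by
  let T : Finset (Sentence A × Sentence A) := {ps ∈ splits K | u ++ ps.2.flatten = z}
  have hunion : {g : Filling | ∃ ps ∈ splits K, u ++ ps.2.flatten = z ∧
      ∃ f ∈ S ps.1, g = ρ ps.2 :: f} =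
        ⋃ ps ∈ (T : Set (Sentence A × Sentence A)), (ρ ps.2 :: ·) '' S ps.1 := by
    ext g
    simp only [T, Set.mem_ofPred_eq, Set.mem_iUnion, Finset.mem_coe, Finset.mem_filter,
      Set.mem_image, exists_prop, and_assoc, eq_comm (a := g)]
  have hpairwise : (T : Set (Sentence A × Sentence A)).PairwiseDisjoint
      fun ps => (ρ ps.2 :: ·) '' S ps.1 := by
    intro ps hps qt hqt hne
    have hmem := (Finset.mem_filter.1 hps).1
    have hmem' := (Finset.mem_filter.1 hqt).1
    have hlen : ps.1.length = qt.1.length :=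
      (length_of_mem_splits hmem).1.trans (length_of_mem_splits hmem').1.symm
    have hfst : ps.1 ≠ qt.1 := fun h => hne (splits_injOn_fst K hmem hmem' h)
    refine Set.disjoint_left.2 ?_
    rintro _ ⟨f, hf, rfl⟩ ⟨f', hf', heq⟩
    exact Set.disjoint_left.1 (hdisj _ _ hlen hfst) hf ((List.cons.inj heq).2 ▸ hf')
  rw [hunion, Set.Finite.encard_biUnion T.finite_toSet hpairwise, finsum_mem_coe_finset,
    rowSum, ← Finset.sum_filter, Nat.cast_sum]
  refine Finset.sum_congr rfl fun ps _ => ?_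
  rw [Set.InjOn.encard_image (by simp), hS]

lemma disjoint_tableaux (I : Sentence A) (n : ℕ) {p q : Sentence A} (hlen : p.length = q.length)
    (hne : p ≠ q) : Disjoint (tableaux I n p) (tableaux I n q) :=
  Set.disjoint_left.2 fun _ hp hq =>
    hne (sentence_ext_getD hlen fun i => (hp.2.2 i).symm.trans (hq.2.2 i))

lemma encard_tableaux_nil (n : ℕ) (K : Sentence A) :
    (tableaux [] n K).encard = tabCount [] K := by
  induction K generalizing n with
  | nil =>
    have hset : tableaux ([] : Sentence A) n [] = {[]} := by
      ext f
      constructor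
      · exact fun hf => List.map_eq_nil_iff.1 hf.1.1
      · rintro rfl
        exact ⟨⟨rfl, by simp, .nil, by simp⟩, by simp, fun i => rfl⟩
    simp [hset, tabCount, flattenWS]
  | cons x K ih =>
    by_cases hx : x = []
    · rw [hx, tableaux_nil_cons, ih, tabCount_nil_cons]
    · have hset : tableaux [] n (x :: K) = ∅ :=
        Set.eq_empty_of_forall_notMem fun f hf => hx (hf.2.2 0).symm
      simp [hset, tabCount, flattenWS_cons_of_ne_nil hx]

lemma encard_tableaux {I : Sentence A} (hI : IsSentence I) (n : ℕ) (K : Sentence A) :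
    (tableaux I n K).encard = tabCount I K := by
  induction I generalizing n K with
  | nil => exact encard_tableaux_nil n K
  | cons w I ih =>
    obtain ⟨hw, hI⟩ := List.forall_mem_cons.1 hI
    induction K generalizing n with
    | nil => simp [tableaux_cons_nil hw]
    | cons x K ihK =>
      by_cases hx : x = []
      · rw [hx, tableaux_nil_cons, ihK, tabCount_nil_cons]
      · have hset : tableaux (w :: I) n (x :: K) = {g | ∃ ps ∈ splits K, x ++ ps.2.flatten = w ∧
            ∃ f ∈ tableaux I (n + 1) ps.1, g = rowFill n (x :: ps.2) :: f} := by
          refine Set.Subset.antisymm (fun g => exists_splits_of_mem_tableaux hw) ?_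
          rintro _ ⟨ps, hps, rfl, f, hf, rfl⟩
          exact rowFill_cons_mem_tableaux hx hps hf
        rw [hset, tabCount_cons_cons hx]
        exact encard_cons_eq_rowSum (ih hI (n + 1)) (fun _ _ => disjoint_tableaux I (n + 1)) x w
          (fun s => rowFill n (x :: s)) K

lemma mem_monoOf_snd {I : Sentence A} {f : Filling} (hf : IsCIT I f) {v : ℕ} :
    v ∈ (monoOf I f).2 ↔ 1 ≤ v ∧ typeWord I f v ≠ [] := by
  simp only [monoOf, List.mem_filter, List.mem_map, List.mem_range, Bool.not_eq_true',
    List.isEmpty_eq_false_iff]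
  refine and_congr_left fun hv => ⟨?_, fun hpos => ⟨v - 1, ?_, Nat.sub_add_cancel hpos⟩⟩
  · rintro ⟨a, -, rfl⟩
    exact Nat.le_add_left 1 a
  · have hmem : v ∈ f.flatten := not_not.1 fun h => hv ((typeWord_eq_nil_iff hf.1 v).2 h)
    have hmax : v ≤ maxEntry f := List.le_max_of_le hmem le_rfl
    omega

lemma pairwise_monoOf_snd (I : Sentence A) (f : Filling) : (monoOf I f).2.Pairwise (· < ·) :=
  (List.pairwise_map.2 (List.pairwise_lt_range.imp Nat.succ_lt_succ)).filter _

lemma monoOf_eq_iff {I : Sentence A} {f : Filling} (hf : IsCIT I f) {K : Sentence A}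
    (hK : IsSentence K) : monoOf I f = (K, List.range' 1 K.length) ↔
      ∀ i, typeWord I f (1 + i) = K.getD i [] := by
  constructor
  · intro h i
    rcases lt_or_ge i K.length with hi | hi
    · have hfst : (List.range' 1 K.length).map (typeWord I f) = K := by
        have hsnd : (monoOf I f).2 = List.range' 1 K.length := congrArg Prod.snd h
        rw [← hsnd]
        exact congrArg Prod.fst h
      conv_rhs => rw [← hfst]
      simp [hi]
    · have hnotMem : 1 + i ∉ (monoOf I f).2 := by
        rw [h, List.mem_range'_1]
        omega
      rw [mem_monoOf_snd hf] at hnotMem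
      simpa [hi] using hnotMem
  · intro h
    have hsnd : (monoOf I f).2 = List.range' 1 K.length := by
      refine (pairwise_monoOf_snd I f).eq_of_mem_iff List.pairwise_lt_range' fun v => ?_
      rw [mem_monoOf_snd hf, List.mem_range'_1]
      refine and_congr_right fun hv => ?_
      obtain ⟨i, rfl⟩ := Nat.exists_eq_add_of_le hv
      rw [h, Nat.add_lt_add_iff_left]
      rcases lt_or_ge i K.length with hi | hi
      · simpa [hi] using hK _ (List.getElem_mem hi)
      · simp [hi]
    have hfst : (monoOf I f).1 = K := by
      change (monoOf I f).2.map (typeWord I f) = K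
      rw [hsnd]
      exact List.ext_getElem (by simp) fun i _ hi => by simp [h, hi]
    exact Prod.ext hfst hsnd

lemma coeffM_dualImm {I K : Sentence A} (hI : IsSentence I) (hK : IsSentence K) :
    coeffM (dualImm I) K = tabCount I K := by
  have hset : {f | IsCIT I f ∧ monoOf I f = (K, List.range' 1 K.length)} = tableaux I 0 K := by
    ext f
    refine and_congr_right fun hf => ?_
    rw [monoOf_eq_iff hf hK, zero_add]
    exact (and_iff_right hf.2.2.2).symm
  rw [coeffM, dualImm, hset, Set.ncard, encard_tableaux hI, ENat.toNat_natCast]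

lemma skewHasType_iff {I J : Sentence A} {f : Filling} {K : Sentence A} :
    SkewHasType I J f K ↔ ∀ i, skewTypeWord I J f (1 + i) = K.getD i [] := by
  constructor
  · intro h i
    simpa using h (1 + i) (by omega)
  · intro h v hv
    simpa [hv] using h (v - 1)

lemma skewTypeWord_cons_cons (w v : List A) (I J : Sentence A) (r : List ℕ) (f : Filling) (x : ℕ) :
    skewTypeWord (w :: I) (v :: J) (r :: f) x =
      skewTypeWord I J f x ++ rowWith (w.drop v.length) r x := by
  simp [skewTypeWord, List.range_succ_eq_map, Function.comp_def, List.map_reverse]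

lemma skewTypeWord_nil {I : Sentence A} {f : Filling}
    (hshape : f.map List.length = I.map List.length) (x : ℕ) :
    skewTypeWord I [] f x = typeWord I f x := by
  induction I generalizing f with
  | nil => simp [skewTypeWord, typeWord]
  | cons w I ih =>
    obtain ⟨r, f, rfl, -, hf⟩ := List.map_eq_cons_iff.1 hshape
    rw [typeWord_cons, ← ih hf]
    simp [skewTypeWord, List.range_succ_eq_map, Function.comp_def, List.map_reverse]

lemma map_getD_range {α β : Type*} (l : List α) (d : α) (F : α → β) :
    (List.range l.length).map (fun i => F (l.getD i d)) = l.map F :=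
  List.ext_getElem (by simp) fun i _ hi => by
    have hi' : i < l.length := by simpa using hi
    simp [hi']

lemma isSkewCIT_nil (I : Sentence A) (f : Filling) : IsSkewCIT I [] f ↔ IsCIT I f := by
  have hshape : (List.range I.length).map
      (fun i => (I.getD i []).length - (([] : Sentence A).getD i []).length) =
        I.map List.length := by
    simpa using map_getD_range I [] List.length
  rw [IsSkewCIT, hshape]
  refine and_congr_right fun h => ?_
  have hlen : f.length = I.length := by simpa using congrArg List.length h
  have hheads : (List.range I.length).filterMap (fun i =>
      if (([] : Sentence A).getD i []).length = 0 then (f.getD i []).head? else none) =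
        f.filterMap List.head? := by
    conv_rhs => rw [← List.map_id f, ← map_getD_range f [] id, List.filterMap_map, hlen]
    rfl
  rw [hheads]

lemma isSkewCIT_cons_cons {v : List A} (hv : v ≠ []) (w : List A) (I J : Sentence A) (r : List ℕ)
    (f : Filling) :
    IsSkewCIT (w :: I) (v :: J) (r :: f) ↔
      (r.length = w.length - v.length ∧ r.IsChain (· ≤ ·) ∧ ∀ x ∈ r, 1 ≤ x) ∧
        IsSkewCIT I J f := by
  have hv' : v.length ≠ 0 := by simpa using hv
  change (_ ∧ (∀ s ∈ _, List.IsChain (· ≤ ·) s) ∧ List.IsChain (· < ·) _ ∧ _) ↔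
    _ ∧ _ ∧ (∀ s ∈ _, List.IsChain (· ≤ ·) s) ∧ List.IsChain (· < ·) _ ∧ _
  simp only [List.length_cons, List.range_succ_eq_map, List.map_cons, List.map_map,
    List.filterMap_cons, List.getD_cons_zero, hv', if_false, List.filterMap_map,
    Function.comp_def, List.getD_cons_succ, List.cons.injEq, List.forall_mem_cons,
    List.flatten_cons, List.forall_mem_append]
  tauto

/-- The skew colored immaculate tableaux of shape `I/J` and type `K`. -/
def skewTableaux (I J K : Sentence A) : Set Filling :=
  {f | IsSkewCIT I J f ∧ SkewHasType I J f K}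

lemma skewTableaux_nil (I K : Sentence A) : skewTableaux I [] K = tableaux I 0 K := by
  ext f
  rw [skewTableaux, Set.mem_ofPred_eq, isSkewCIT_nil]
  refine and_congr_right fun hf => ?_
  simp only [skewHasType_iff, skewTypeWord_nil hf.1]
  exact (and_iff_right hf.2.2.2).symm

lemma skewTableaux_cons_cons {v : List A} (hv : v ≠ []) (y : List A) (I J K : Sentence A) :
    skewTableaux ((v ++ y) :: I) (v :: J) K =
      {g | ∃ ps ∈ splits K, v ++ ps.2.flatten = v ++ y ∧
        ∃ f ∈ skewTableaux I J ps.1, g = rowFill 0 ps.2 :: f} := by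
  ext g
  constructor
  · rintro ⟨hg, htype⟩
    obtain ⟨r, f, rfl⟩ : ∃ r f, g = r :: f :=
      List.exists_cons_of_ne_nil fun h => by simpa [h] using congrArg List.length hg.1
    obtain ⟨⟨hlen, hchain, hpos⟩, hf⟩ := (isSkewCIT_cons_cons hv ..).1 hg
    simp only [skewHasType_iff, skewTypeWord_cons_cons, List.drop_left] at htype
    obtain ⟨ps, hps, htail, hhead⟩ := (append_eq_getD_iff K _ _).1 htype
    obtain ⟨rfl, rfl⟩ := flatten_eq_and_eq_rowFill_iff.1 ⟨by simpa using hlen, hchain, hpos, hhead⟩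
    exact ⟨ps, hps, rfl, f, ⟨hf, skewHasType_iff.2 htail⟩, rfl⟩
  · rintro ⟨ps, hps, hy, f, ⟨hf, htail⟩, rfl⟩
    obtain ⟨hlen, hchain, hpos, hhead⟩ :=
      flatten_eq_and_eq_rowFill_iff.2 ⟨List.append_cancel_left hy, rfl⟩
    refine ⟨(isSkewCIT_cons_cons hv ..).2 ⟨⟨by simpa using hlen, hchain, hpos⟩, hf⟩, ?_⟩
    simp only [skewHasType_iff, skewTypeWord_cons_cons, List.drop_left] at htail ⊢
    exact (append_eq_getD_iff K _ _).2 ⟨ps, hps, htail, hhead⟩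

lemma disjoint_skewTableaux (I J : Sentence A) {p q : Sentence A} (hlen : p.length = q.length)
    (hne : p ≠ q) : Disjoint (skewTableaux I J p) (skewTableaux I J q) :=
  Set.disjoint_left.2 fun _ hp hq => hne <| sentence_ext_getD hlen fun i =>
    (skewHasType_iff.1 hp.2 i).symm.trans (skewHasType_iff.1 hq.2 i)

lemma leftContained_cons_cons {v w : List A} {J I : Sentence A}
    (h : LeftContained (v :: J) (w :: I)) : v <+: w ∧ LeftContained J I :=
  ⟨by simpa using h.2 0 (by simp), by simpa using h.1,
    fun i hi => by simpa using h.2 (i + 1) (by simpa using hi)⟩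

lemma encard_skewTableaux {I J : Sentence A} (hI : IsSentence I) (hJ : IsSentence J)
    (hJI : LeftContained J I) (K : Sentence A) :
    (skewTableaux I J K).encard = skewCount I J K := by
  induction J generalizing I K with
  | nil => rw [skewTableaux_nil, encard_tableaux hI, skewCount]
  | cons v J ih =>
    obtain ⟨hv, hJ⟩ := List.forall_mem_cons.1 hJ
    cases I with
    | nil => exact absurd hJI.1 (by simp)
    | cons w I =>
      obtain ⟨⟨y, rfl⟩, hJI'⟩ := leftContained_cons_cons hJI
      rw [skewTableaux_cons_cons hv, skewCount]
      exact encard_cons_eq_rowSum (ih (List.forall_mem_cons.1 hI).2 hJ hJI')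
        (fun _ _ => disjoint_skewTableaux I J) v (v ++ y) (rowFill 0) K

lemma pairNQ_mulN_ImmS_dualImm {I J K : Sentence A} (hI : IsSentence I) (hJ : IsSentence J)
    (hK : IsSentence K) :
    pairNQ (mulN (ImmS J) (Hd K)) (dualImm I) = skewCount I J K := by
  rw [pairNQ_mulN_ImmS hJ hK, ← linearCombination_tabCount_immComb hJ]
  refine Finset.sum_congr rfl fun M hM => ?_
  have hMK : IsSentence (M ++ K) := List.forall_mem_append.2 ⟨immComb_mem_NSymFin hJ hM, hK⟩
  simp [coeffM_dualImm hI hMK]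

theorem statement18_general {I J K : Sentence A} (hI : IsSentence I) (hJ : IsSentence J)
    (hK : IsSentence K) (hJI : LeftContained J I) :
    pairNQ (mulN (ImmS J) (Hd K)) (dualImm I) =
      (Set.ncard {f : Filling | IsSkewCIT I J f ∧ SkewHasType I J f K} : ℚ) := by
  have hcard := encard_skewTableaux hI hJ hJI K
  rw [skewTableaux] at hcard
  rw [pairNQ_mulN_ImmS_dualImm hI hJ hK, Set.ncard, hcard, ENat.toNat_natCast]

end ColoredImm

namespace ColoredImm

/-- Let `I, J` be sentences with `J ⊆_L I` and let `K` be a sentence with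
`|K| = |I| - |J|`.  Then `⟨𝔖_J · H_K, 𝔖*_I⟩` equals the number of skew colored immaculate
tableaux of shape `I/J` and type `K`. -/
theorem statement18 {A : Type*} (I J K : Sentence A)
    (hI : IsSentence I) (hJ : IsSentence J) (hK : IsSentence K)
    (hL : LeftContained J I) (hsz : size K = size I - size J) :
    pairNQ (mulN (ImmS J) (Hd K)) (dualImm I) =
      (Set.ncard {f : Filling | IsSkewCIT I J f ∧ SkewHasType I J f K} : ℚ) :=
  statement18_general hI hJ hK hL

end ColoredImm
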